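/- Assume the finite-state Euler–Maruyama setting with additive noise (σ(x,i) = σ(i) depends only on i ∈ S), the global Lipschitz condition with constant L, condition (H) with parameters c_0 and (β_i), and the averaging condition Σ_i μ_i β_i < 0. Fix p ∈ (0,1) with η_p > 0 and a strictly positive eigenvector ξ^{(p)} of Q_p with Q_p ξ^{(p)} = −η_p ξ^{(p)}, and set ξ̂_0 := max_i ξ^{(p)}_i, ξ̄_0 := (min_i ξ^{(p)}_i)^{−1}, β_0 := max_i |β_i|, q_0 := max_i(−q_ii), and α := p·[β_0 + 4L²(3+4β_0) + 4^{(2+p)/2} β_0 (4^{p/2} L^p + q_0 ξ̂_0 ξ̄_0)]. Then for every stepsize δ ∈ (0,1) with δ < (1/(16L²)) ∧ (η_p/α)^{2/p}, the Euler–Maruyama transition kernel K_δ on ℝⁿ × S admits exactly one invariant probability measure π^δ. -/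

import Mathlib

open MeasureTheory ProbabilityTheory

/-- `Q` has nonnegative off-diagonal entries and every row sums to zero
(a conservative Q-matrix). -/
def IsConservativeQMatrix {N : ℕ} (Q : Matrix (Fin N) (Fin N) ℝ) : Prop :=
  (∀ i j, i ≠ j → 0 ≤ Q i j) ∧ ∀ i, ∑ j, Q i j = 0

/-- Irreducibility: any two distinct states are connected by a finite chain of
transitions with strictly positive rates. -/
def MatrixIrreducible {N : ℕ} (Q : Matrix (Fin N) (Fin N) ℝ) : Prop :=
  ∀ i j : Fin N, i ≠ j → ∃ (k : ℕ) (c : ℕ → Fin N),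
    c 0 = i ∧ c k = j ∧ ∀ l < k, 0 < Q (c l) (c (l + 1))

/-- The set of real parts of the (complex) eigenvalues of a real matrix. -/
def spectrumRe {N : ℕ} (M : Matrix (Fin N) (Fin N) ℝ) : Set ℝ :=
  {x : ℝ | ∃ γ ∈ spectrum ℂ (M.map Complex.ofReal), γ.re = x}

/-- The matrix exponential `exp M = ∑ₖ Mᵏ/k!`. -/
noncomputable def matExp {N : ℕ} (M : Matrix (Fin N) (Fin N) ℝ) :
    Matrix (Fin N) (Fin N) ℝ :=
  ∑' k : ℕ, ((k.factorial : ℝ)⁻¹) • M ^ k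

/-- Standard Gaussian measure on `ℝ^m`. -/
noncomputable def stdGaussianPi (m : ℕ) : Measure (Fin m → ℝ) :=
  Measure.pi fun _ => gaussianReal 0 1

/-- The distribution on `Fin N` with weights given by row `i` of `P`. -/
noncomputable def rowMeasure {N : ℕ} (P : Matrix (Fin N) (Fin N) ℝ) (i : Fin N) :
    Measure (Fin N) :=
  ∑ j : Fin N, ENNReal.ofReal (P i j) • Measure.dirac j

/-- Hilbert–Schmidt norm of a real matrix. -/
noncomputable def hsNorm {n m : ℕ} (M : Matrix (Fin n) (Fin m) ℝ) : ℝ :=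
  Real.sqrt (∑ i, ∑ j, (M i j) ^ 2)

/-- One step of the Euler–Maruyama scheme as a transition kernel on `ℝⁿ × S`:
starting from `(x, i)`, the next state is
`(x + δ b(x,i) + √δ σ(x,i) Z, J)` with `Z` standard Gaussian on `ℝ^m` and
`J` distributed according to row `i` of `exp(δ Q)`, independently. -/
noncomputable def EMKernel {n m N : ℕ} (Q : Matrix (Fin N) (Fin N) ℝ)
    (b : EuclideanSpace ℝ (Fin n) → Fin N → EuclideanSpace ℝ (Fin n))
    (σ : EuclideanSpace ℝ (Fin n) → Fin N → Matrix (Fin n) (Fin m) ℝ)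
    (δ : ℝ) (q : EuclideanSpace ℝ (Fin n) × Fin N) :
    Measure (EuclideanSpace ℝ (Fin n) × Fin N) :=
  Measure.map
    (fun zj : (Fin m → ℝ) × Fin N =>
      (q.1 + δ • b q.1 q.2 +
        Real.sqrt δ • ((WithLp.equiv 2 (Fin n → ℝ)).symm ((σ q.1 q.2).mulVec zj.1)),
        zj.2))
    ((stdGaussianPi m).prod (rowMeasure (matExp (δ • Q)) q.2))

/-- `π` is an invariant measure of the kernel `K`. -/
def IsInvariantMeasure {α : Type*} [MeasurableSpace α] (K : α → Measure α)
    (π : Measure α) : Prop :=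
  ∀ A : Set α, MeasurableSet A → ∫⁻ q, K q A ∂π = π A

/-!
With additive noise, two Euler–Maruyama steps driven by the same Gaussian differ by
`x - y + δ (b(x, i) - b(y, i))`, whose `p`-th power is at most
`exp ((p / 2) β_i δ + O(δ²)) |x - y| ^ p`. Since `Q ξ ≤ -(η + (p / 2) β) ξ`, Grönwall's inequality
gives `exp (δ Q) ξ ≤ exp (-(η + (p / 2) β) δ + O(δ²)) ξ`: the growth rates `β_i` cancel, and the
synchronous coupling contracts `ξ_i |x - y| ^ p` on average by `exp (-η δ + O(δ²)) < 1`.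

For `y` fixed this is a drift condition, which yields an invariant law by the Krylov–Bogoliubov
argument. Dually, the kernel contracts the fibrewise `p`-Hölder constants of test functions, so an
invariant law is determined by its regime marginal; this marginal is invariant under the strictly
positive matrix `exp (δ Q)`, hence unique.
-/

section MatrixExponential

attribute [local instance] Matrix.linftyOpNormedRing Matrix.linftyOpNormedAlgebra

variable {ι : Type*} [Fintype ι] [DecidableEq ι] {A : Matrix ι ι ℝ}

lemma hasSum_matrix_exp_apply (A : Matrix ι ι ℝ) (i j : ι) :
    HasSum (fun k : ℕ => (k.factorial : ℝ)⁻¹ * (A ^ k) i j) (NormedSpace.exp A i j) :=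
  Pi.hasSum.1 (Pi.hasSum.1 (NormedSpace.exp_series_hasSum_exp' (𝕂 := ℝ) A) i) j

lemma matrix_exp_add_smul_one (A : Matrix ι ι ℝ) (c : ℝ) :
    NormedSpace.exp (A + c • (1 : Matrix ι ι ℝ)) = Real.exp c • NormedSpace.exp A := by
  have exp_scalar : NormedSpace.exp (c • (1 : Matrix ι ι ℝ)) = Real.exp c • 1 := by
    rw [← Algebra.algebraMap_eq_smul_one, ← Algebra.algebraMap_eq_smul_one, Real.exp_eq_exp_ℝ]
    exact (NormedSpace.algebraMap_exp_comm c).symm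
  have comm : Commute A (c • (1 : Matrix ι ι ℝ)) := (Commute.one_right A).smul_right c
  rw [Matrix.exp_add_of_commute _ _ comm, exp_scalar, mul_smul_comm, mul_one]

lemma hasDerivAt_matrix_exp_smul_apply (A : Matrix ι ι ℝ) (t : ℝ) (i j : ι) :
    HasDerivAt (fun s : ℝ => NormedSpace.exp (s • A) i j)
      ((NormedSpace.exp (t • A) * A) i j) t :=
  hasDerivAt_pi.1 (hasDerivAt_pi.1 (hasDerivAt_exp_smul_const (𝕂 := ℝ) A t) i) j

lemma matrix_pow_apply_nonneg (hA : ∀ i j, 0 ≤ A i j) (k : ℕ) (i j : ι) : 0 ≤ (A ^ k) i j := by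
  induction k generalizing i j with
  | zero =>
    rw [pow_zero, Matrix.one_apply]
    split_ifs <;> norm_num
  | succ k ih =>
    rw [pow_succ, Matrix.mul_apply]
    exact Finset.sum_nonneg fun l _ => mul_nonneg (ih i l) (hA l j)

lemma matrix_pow_apply_pos_of_chain (hA : ∀ i j, 0 ≤ A i j) (c : ℕ → ι) (k : ℕ)
    (hc : ∀ l < k, 0 < A (c l) (c (l + 1))) : 0 < (A ^ k) (c 0) (c k) := by
  induction k with
  | zero => simp
  | succ k ih =>
    rw [pow_succ, Matrix.mul_apply]
    refine Finset.sum_pos' (fun l _ => mul_nonneg (matrix_pow_apply_nonneg hA k _ _) (hA _ _)) ?_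
    exact ⟨c k, Finset.mem_univ _,
      mul_pos (ih fun l hl => hc l (hl.trans k.lt_succ_self)) (hc k k.lt_succ_self)⟩

lemma exp_neg_mul_pow_add_smul_one_le_matrix_exp {c : ℝ}
    (hA : ∀ i j, 0 ≤ (A + c • (1 : Matrix ι ι ℝ)) i j) (k : ℕ) (i j : ι) :
    Real.exp (-c) * ((k.factorial : ℝ)⁻¹ * ((A + c • (1 : Matrix ι ι ℝ)) ^ k) i j)
      ≤ NormedSpace.exp A i j := by
  have term_le : (k.factorial : ℝ)⁻¹ * ((A + c • (1 : Matrix ι ι ℝ)) ^ k) i j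
      ≤ NormedSpace.exp (A + c • (1 : Matrix ι ι ℝ)) i j :=
    le_hasSum (hasSum_matrix_exp_apply _ i j) k fun l _ =>
      mul_nonneg (by positivity) (matrix_pow_apply_nonneg hA l i j)
  rw [matrix_exp_add_smul_one, Matrix.smul_apply, smul_eq_mul] at term_le
  calc _ ≤ Real.exp (-c) * (Real.exp c * NormedSpace.exp A i j) := by gcongr
    _ = NormedSpace.exp A i j := by rw [← mul_assoc, ← Real.exp_add, neg_add_cancel]; simp

lemma sum_matrix_exp_apply_eq_one (hA : ∀ i, ∑ j, A i j = 0) (i : ι) :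
    ∑ j, NormedSpace.exp A i j = 1 := by
  have mulVec_one : A.mulVec 1 = 0 := by
    ext i
    simpa [Matrix.mulVec, dotProduct] using hA i
  have pow_mulVec_one (k : ℕ) (hk : k ≠ 0) : ∑ j, (A ^ k) i j = 0 := by
    obtain ⟨l, rfl⟩ := Nat.exists_eq_succ_of_ne_zero hk
    have : (A ^ l * A).mulVec 1 i = 0 := by rw [← Matrix.mulVec_mulVec, mulVec_one]; simp
    simpa [Matrix.mulVec, dotProduct, pow_succ] using this
  refine (hasSum_sum fun j _ => hasSum_matrix_exp_apply A i j).unique ?_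
  have hsum := hasSum_single (f := fun k : ℕ => ∑ j, (k.factorial : ℝ)⁻¹ * (A ^ k) i j) 0
    fun k hk => by rw [← Finset.mul_sum, pow_mulVec_one k hk, mul_zero]
  simpa [Matrix.one_apply] using hsum

end MatrixExponential

lemma matExp_eq_exp {N : ℕ} (M : Matrix (Fin N) (Fin N) ℝ) : matExp M = NormedSpace.exp M := by
  rw [NormedSpace.exp_eq_tsum ℝ]
  rfl

namespace IsConservativeQMatrix

variable {N : ℕ} {Q : Matrix (Fin N) (Fin N) ℝ} {q₀ t : ℝ}

lemma diag_nonpos (hQ : IsConservativeQMatrix Q) (i : Fin N) : Q i i ≤ 0 := by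
  have row_sum := hQ.2 i
  rw [← Finset.add_sum_erase _ _ (Finset.mem_univ i)] at row_sum
  have off_diag : 0 ≤ ∑ j ∈ Finset.univ.erase i, Q i j :=
    Finset.sum_nonneg fun j hj => hQ.1 i j (Finset.ne_of_mem_erase hj).symm
  linarith

lemma smul_add_smul_one_apply_nonneg (hQ : IsConservativeQMatrix Q) (hq : ∀ i, -Q i i ≤ q₀)
    (ht : 0 ≤ t) (i j : Fin N) :
    0 ≤ (t • Q + (t * q₀) • (1 : Matrix (Fin N) (Fin N) ℝ)) i j := by
  rw [Matrix.add_apply, Matrix.smul_apply, Matrix.smul_apply]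
  obtain rfl | hij := eq_or_ne i j
  · simp only [Matrix.one_apply_eq, smul_eq_mul, mul_one]
    linarith [mul_le_mul_of_nonneg_left (hq i) ht]
  · simp only [Matrix.one_apply_ne hij, smul_eq_mul, mul_zero, add_zero]
    exact mul_nonneg ht (hQ.1 i j hij)

lemma exp_neg_mul_pow_le_matExp (hQ : IsConservativeQMatrix Q) (hq : ∀ i, -Q i i ≤ q₀)
    (ht : 0 ≤ t) (k : ℕ) (i j : Fin N) :
    Real.exp (-(t * q₀)) * ((k.factorial : ℝ)⁻¹ *
      ((t • Q + (t * q₀) • (1 : Matrix (Fin N) (Fin N) ℝ)) ^ k) i j) ≤ matExp (t • Q) i j :=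
  matExp_eq_exp (t • Q) ▸
    exp_neg_mul_pow_add_smul_one_le_matrix_exp (hQ.smul_add_smul_one_apply_nonneg hq ht) k i j

lemma one_sub_mul_le_matExp_diag (hQ : IsConservativeQMatrix Q) (hq : ∀ i, -Q i i ≤ q₀)
    (ht : 0 ≤ t) (i : Fin N) : 1 - q₀ * t ≤ matExp (t • Q) i i := by
  have h := hQ.exp_neg_mul_pow_le_matExp hq ht 0 i i
  simp only [Nat.factorial_zero, Nat.cast_one, inv_one, pow_zero, Matrix.one_apply_eq,
    mul_one] at h
  linarith [Real.add_one_le_exp (-(t * q₀))]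

lemma matExp_mem_rowStochastic (hQ : IsConservativeQMatrix Q) (ht : 0 ≤ t) :
    matExp (t • Q) ∈ Matrix.rowStochastic ℝ (Fin N) := by
  obtain ⟨q₀, hq⟩ := (Set.finite_range fun i => -Q i i).bddAbove
  rw [mem_upperBounds, Set.forall_mem_range] at hq
  refine Matrix.mem_rowStochastic_iff_sum.2 ⟨fun i j => ?_, fun i => ?_⟩
  · refine le_trans ?_ (hQ.exp_neg_mul_pow_le_matExp hq ht 0 i j)
    have := matrix_pow_apply_nonneg (hQ.smul_add_smul_one_apply_nonneg hq ht) 0 i j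
    positivity
  · rw [matExp_eq_exp]
    refine sum_matrix_exp_apply_eq_one (fun i => ?_) i
    simp only [Matrix.smul_apply, smul_eq_mul, ← Finset.mul_sum, hQ.2, mul_zero]

lemma matExp_pos (hQ : IsConservativeQMatrix Q) (hirr : MatrixIrreducible Q) (ht : 0 < t)
    (i j : Fin N) : 0 < matExp (t • Q) i j := by
  obtain ⟨q₀, hq⟩ := (Set.finite_range fun i => -Q i i).bddAbove
  rw [mem_upperBounds, Set.forall_mem_range] at hq
  obtain ⟨k, c, rfl, rfl, hc⟩ : ∃ (k : ℕ) (c : ℕ → Fin N), c 0 = i ∧ c k = j ∧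
      ∀ l < k, 0 < Q (c l) (c (l + 1)) := by
    obtain rfl | hij := eq_or_ne i j
    · exact ⟨0, fun _ => i, rfl, rfl, fun l hl => absurd hl l.not_lt_zero⟩
    · exact hirr i j hij
  have chain_pos (l : ℕ) (hl : l < k) :
      0 < (t • Q + (t * q₀) • (1 : Matrix (Fin N) (Fin N) ℝ)) (c l) (c (l + 1)) := by
    have hne : c l ≠ c (l + 1) := fun h => by
      have := hc l hl
      rw [← h] at this
      exact this.not_ge (hQ.diag_nonpos _)
    simpa [Matrix.one_apply_ne hne] using mul_pos ht (hc l hl)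
  have pow_pos := matrix_pow_apply_pos_of_chain (hQ.smul_add_smul_one_apply_nonneg hq ht.le) c k
    chain_pos
  exact lt_of_lt_of_le (by positivity) (hQ.exp_neg_mul_pow_le_matExp hq ht.le k _ _)

end IsConservativeQMatrix

lemma le_exp_sub_mul_of_hasDerivAt_le {u u' g g' : ℝ → ℝ} {δ : ℝ} (hδ : 0 ≤ δ)
    (hu : ∀ t, HasDerivAt u (u' t) t) (hg : ∀ t, HasDerivAt g (g' t) t)
    (hle : ∀ t ∈ Set.Ioo 0 δ, u' t ≤ g' t * u t) : u δ ≤ Real.exp (g δ - g 0) * u 0 := by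
  have hderiv (t : ℝ) : HasDerivAt (fun s => Real.exp (-g s) * u s)
      (Real.exp (-g t) * (u' t - g' t * u t)) t := by
    refine ((hg t).fun_neg.exp.mul (hu t)).congr_deriv ?_
    ring
  have hanti : AntitoneOn (fun s => Real.exp (-g s) * u s) (Set.Icc 0 δ) := by
    refine antitoneOn_of_hasDerivWithinAt_nonpos (convex_Icc 0 δ)
      (fun t _ => (hderiv t).continuousAt.continuousWithinAt)
      (fun t _ => (hderiv t).hasDerivWithinAt) fun t ht => ?_
    rw [interior_Icc] at ht
    exact mul_nonpos_of_nonneg_of_nonpos (Real.exp_pos _).le (sub_nonpos.2 (hle t ht))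
  have hends := hanti (Set.left_mem_Icc.2 hδ) (Set.right_mem_Icc.2 hδ) hδ
  calc u δ = Real.exp (g δ) * (Real.exp (-g δ) * u δ) := by
        rw [← mul_assoc, ← Real.exp_add, add_neg_cancel, Real.exp_zero, one_mul]
    _ ≤ Real.exp (g δ) * (Real.exp (-g 0) * u 0) := by gcongr
    _ = Real.exp (g δ - g 0) * u 0 := by rw [← mul_assoc, ← Real.exp_add, ← sub_eq_add_neg]

section WeightedRowSum

open Matrix

lemma sum_erase_mul_le_of_mem_rowStochastic {ι : Type*} [Fintype ι] [DecidableEq ι]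
    {P : Matrix ι ι ℝ} (hP : P ∈ rowStochastic ℝ ι) {ξ : ι → ℝ} {r : ℝ}
    (hr : ∀ i j, ξ i ≤ r * ξ j) (i : ι) :
    ∑ k ∈ Finset.univ.erase i, P i k * ξ k ≤ (1 - P i i) * (r * (P *ᵥ ξ) i) := by
  have le_average (k : ι) : ξ k ≤ r * (P *ᵥ ξ) i :=
    calc ξ k = ∑ l, P i l * ξ k := by
          rw [← Finset.sum_mul, sum_row_of_mem_rowStochastic hP, one_mul]
      _ ≤ ∑ l, P i l * (r * ξ l) := by
          gcongr with l
          exacts [nonneg_of_mem_rowStochastic hP, hr k l]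
      _ = r * (P *ᵥ ξ) i := by
          rw [mulVec, dotProduct, Finset.mul_sum]
          exact Finset.sum_congr rfl fun l _ => by ring
  have mass_erase : ∑ k ∈ Finset.univ.erase i, P i k = 1 - P i i := by
    rw [Finset.sum_erase_eq_sub (Finset.mem_univ i), sum_row_of_mem_rowStochastic hP]
  rw [← mass_erase, Finset.sum_mul]
  gcongr with k
  exacts [nonneg_of_mem_rowStochastic hP, le_average k]

variable {N : ℕ} {Q : Matrix (Fin N) (Fin N) ℝ} {a ξ : Fin N → ℝ} {η q₀ D r t : ℝ}

lemma matExp_mul_mulVec_le (hQ : IsConservativeQMatrix Q) (hq : ∀ i, -Q i i ≤ q₀)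
    (hξ : ∀ i, 0 < ξ i) (hr : ∀ i j, ξ i ≤ r * ξ j) (ha : ∀ i k, a i - a k ≤ D)
    (hsup : ∀ i, (Q *ᵥ ξ) i ≤ -(η + a i) * ξ i) (ht : 0 ≤ t) (i : Fin N) :
    ((matExp (t • Q) * Q) *ᵥ ξ) i
      ≤ (-(η + a i) + D * q₀ * r * t) * (matExp (t • Q) *ᵥ ξ) i := by
  set P := matExp (t • Q)
  have hP : P ∈ rowStochastic ℝ (Fin N) := hQ.matExp_mem_rowStochastic ht
  have hP0 (k : Fin N) : 0 ≤ P i k := nonneg_of_mem_rowStochastic hP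
  have hD : 0 ≤ D := by simpa using ha i i
  have hr0 : 0 ≤ r := by nlinarith [hr i i, hξ i]
  -- The chain has left `i` with probability at most `q₀ t`, so freezing `a` at `i` costs `O(t)`.
  have off_diag : ∑ k, P i k * ((a i - a k) * ξ k) ≤ D * (q₀ * t * (r * (P *ᵥ ξ) i)) := by
    rw [← Finset.add_sum_erase _ _ (Finset.mem_univ i)]
    calc P i i * ((a i - a i) * ξ i) + ∑ k ∈ Finset.univ.erase i, P i k * ((a i - a k) * ξ k)
        ≤ ∑ k ∈ Finset.univ.erase i, D * (P i k * ξ k) := by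
          rw [sub_self, zero_mul, mul_zero, zero_add]
          refine Finset.sum_le_sum fun k _ => ?_
          nlinarith [mul_le_mul_of_nonneg_right (ha i k) (mul_nonneg (hP0 k) (hξ k).le)]
      _ ≤ D * ((1 - P i i) * (r * (P *ᵥ ξ) i)) := by
          rw [← Finset.mul_sum]
          gcongr
          exact sum_erase_mul_le_of_mem_rowStochastic hP hr i
      _ ≤ D * (q₀ * t * (r * (P *ᵥ ξ) i)) := by
          have : 0 ≤ (P *ᵥ ξ) i :=
            nonneg_mulVec_of_mem_rowStochastic hP (fun k => (hξ k).le) i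
          gcongr
          linarith [hQ.one_sub_mul_le_matExp_diag hq ht i]
  calc ((P * Q) *ᵥ ξ) i = ∑ k, P i k * (Q *ᵥ ξ) k := by rw [← mulVec_mulVec]; rfl
    _ ≤ ∑ k, P i k * (-(η + a k) * ξ k) := by gcongr with k; exacts [hP0 k, hsup k]
    _ = -(η + a i) * (P *ᵥ ξ) i + ∑ k, P i k * ((a i - a k) * ξ k) := by
        rw [mulVec, dotProduct, Finset.mul_sum, ← Finset.sum_add_distrib]
        exact Finset.sum_congr rfl fun k _ => by ring
    _ ≤ (-(η + a i) + D * q₀ * r * t) * (P *ᵥ ξ) i := by linarith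

lemma matExp_smul_mulVec_le (hQ : IsConservativeQMatrix Q) (hq : ∀ i, -Q i i ≤ q₀)
    (hξ : ∀ i, 0 < ξ i) (hr : ∀ i j, ξ i ≤ r * ξ j) (ha : ∀ i k, a i - a k ≤ D)
    (hsup : ∀ i, (Q *ᵥ ξ) i ≤ -(η + a i) * ξ i) (ht : 0 ≤ t) (i : Fin N) :
    (matExp (t • Q) *ᵥ ξ) i ≤ Real.exp (-(η + a i) * t + D * q₀ * r * t ^ 2 / 2) * ξ i := by
  have hu (s : ℝ) : HasDerivAt (fun s => (matExp (s • Q) *ᵥ ξ) i)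
      (((matExp (s • Q) * Q) *ᵥ ξ) i) s := by
    simp only [matExp_eq_exp]
    exact HasDerivAt.fun_sum (u := Finset.univ) fun j _ =>
      (hasDerivAt_matrix_exp_smul_apply Q s i j).mul_const (ξ j)
  have hg (s : ℝ) : HasDerivAt (fun s => -(η + a i) * s + D * q₀ * r * s ^ 2 / 2)
      (-(η + a i) + D * q₀ * r * s) s := by
    convert! ((hasDerivAt_id s).const_mul (-(η + a i))).add
      (((hasDerivAt_pow 2 s).const_mul (D * q₀ * r)).div_const 2) using 1
    push_cast
    ring
  have h := le_exp_sub_mul_of_hasDerivAt_le ht hu hg fun s hs =>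
    matExp_mul_mulVec_le hQ hq hξ hr ha hsup hs.1.le i
  have matExp_zero : matExp ((0 : ℝ) • Q) = 1 := by
    rw [matExp_eq_exp, zero_smul, NormedSpace.exp_zero]
  simpa only [matExp_zero, one_mulVec, mul_zero, ne_eq, OfNat.ofNat_ne_zero, not_false_eq_true,
    zero_pow, zero_div, add_zero, sub_zero] using h

end WeightedRowSum

section FiniteChain

open Matrix

variable {ι : Type*}

lemma eq_zero_of_vecMul_eq_self_of_sum_eq_zero [Fintype ι] [DecidableEq ι] {P : Matrix ι ι ℝ}
    (hP : P ∈ rowStochastic ℝ ι) (hpos : ∀ i j, 0 < P i j) {v : ι → ℝ} (hv : v ᵥ* P = v)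
    (hsum : ∑ i, v i = 0) : v = 0 := by
  set w : ι → ℝ := fun i => max (v i) 0
  have hw0 (i : ι) : 0 ≤ w i := le_max_right _ _
  have subinvariant (j : ι) : w j ≤ (w ᵥ* P) j := by
    refine max_le ?_ (nonneg_vecMul_of_mem_rowStochastic hP hw0 j)
    rw [← congrFun hv j]
    exact Finset.sum_le_sum fun i _ =>
      mul_le_mul_of_nonneg_right (le_max_left _ _) (hpos i j).le
  have mass_eq : ∑ j, w j = ∑ j, (w ᵥ* P) j := by
    simp only [vecMul, dotProduct]
    rw [Finset.sum_comm]
    simp only [← Finset.mul_sum, sum_row_of_mem_rowStochastic hP, mul_one]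
  have invariant (j : ι) : w j = (w ᵥ* P) j :=
    (Finset.sum_eq_sum_iff_of_le fun j _ => subinvariant j).1 mass_eq j (Finset.mem_univ j)
  have nonpos (i : ι) : v i ≤ 0 := by
    by_contra! hi
    have pos (j : ι) : 0 < v j := by
      have : 0 < w j := by
        rw [invariant j]
        exact Finset.sum_pos' (fun k _ => mul_nonneg (hw0 k) (hpos k j).le)
          ⟨i, Finset.mem_univ i, mul_pos (lt_max_of_lt_left hi) (hpos i j)⟩
      exact (lt_max_iff.1 this).resolve_right (lt_irrefl 0)
    exact (Finset.sum_pos (fun j _ => pos j) ⟨i, Finset.mem_univ i⟩).ne' hsum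
  exact funext fun i =>
    (Finset.sum_eq_zero_iff_of_nonpos fun j _ => nonpos j).1 hsum i (Finset.mem_univ i)

lemma eq_of_invariant_of_forall_pos [Finite ι] [MeasurableSpace ι] [MeasurableSingletonClass ι]
    {R : Kernel ι ι} [IsMarkovKernel R] (hR : ∀ i j, 0 < R i {j}) {μ ν : Measure ι}
    [IsProbabilityMeasure μ] [IsProbabilityMeasure ν] (hμ : R.Invariant μ) (hν : R.Invariant ν) :
    μ = ν := by
  classical
  cases nonempty_fintype ι
  set P : Matrix ι ι ℝ := fun i j => (R i).real {j}
  have hP : P ∈ rowStochastic ℝ ι := mem_rowStochastic_iff_sum.2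
    ⟨fun i j => measureReal_nonneg, fun i => by simp [P]⟩
  have hpos (i j : ι) : 0 < P i j := ENNReal.toReal_pos (hR i j).ne' (measure_ne_top _ _)
  have vecMul_eq {m : Measure ι} [IsProbabilityMeasure m] (hm : R.Invariant m) :
      (fun i => m.real {i}) ᵥ* P = fun i => m.real {i} := by
    ext j
    calc ∑ i, m.real {i} * (R i).real {j} = (m.bind R).real {j} := by
          rw [Measure.real, Measure.bind_apply (measurableSet_singleton j) R.aemeasurable,
            lintegral_fintype, ENNReal.toReal_sum
              fun i _ => ENNReal.mul_ne_top (measure_ne_top _ _) (measure_ne_top _ _)]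
          simp only [ENNReal.toReal_mul, Measure.real, mul_comm]
      _ = m.real {j} := by rw [hm.def]
  have diff_eq_zero := eq_zero_of_vecMul_eq_self_of_sum_eq_zero hP hpos
    (v := (fun i => μ.real {i}) - fun i => ν.real {i})
    (by rw [sub_vecMul, vecMul_eq hμ, vecMul_eq hν]) (by simp)
  exact Measure.ext_of_measureReal_singleton fun i => sub_eq_zero.1 (congrFun diff_eq_zero i)

end FiniteChain

section KrylovBogoliubov

open Filter Topology Set
open scoped ENNReal BoundedContinuousFunction

variable {E : Type*} [MeasurableSpace E]

lemma integral_bind_kernel {κ : Kernel E E} {μ : Measure E} {f : E → ℝ}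
    (hf : Integrable f (μ.bind κ)) : ∫ x, f x ∂(μ.bind κ) = ∫ x, ∫ y, f y ∂(κ x) ∂μ := by
  rw [Measure.comp_eq_comp_const_apply] at hf ⊢
  rw [Kernel.integral_comp hf, Kernel.const_apply]

/-- The Cesàro averages `(μ₀ + ⋯ + μₙ) / (n + 1)` of a sequence of measures. -/
noncomputable def cesaroMean (μ : ℕ → Measure E) (n : ℕ) : Measure E :=
  (n + 1 : ℝ≥0∞)⁻¹ • ∑ k ∈ Finset.range (n + 1), μ k

lemma inv_mul_sum_range_succ_le {u : ℕ → ℝ≥0∞} {c : ℝ≥0∞} (hu : ∀ k, u k ≤ c) (n : ℕ) :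
    (n + 1 : ℝ≥0∞)⁻¹ * ∑ k ∈ Finset.range (n + 1), u k ≤ c := by
  have ne_zero : (n + 1 : ℝ≥0∞) ≠ 0 := by positivity
  calc (n + 1 : ℝ≥0∞)⁻¹ * ∑ k ∈ Finset.range (n + 1), u k
      ≤ (n + 1 : ℝ≥0∞)⁻¹ * ((n + 1) * c) := by
        gcongr
        simpa using Finset.sum_le_sum fun k (_ : k ∈ Finset.range (n + 1)) => hu k
    _ = c := ENNReal.inv_mul_cancel_left ne_zero (by finiteness)

lemma cesaroMean_apply_le {μ : ℕ → Measure E} {s : Set E} {c : ℝ≥0∞} (hμ : ∀ k, μ k s ≤ c)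
    (n : ℕ) : cesaroMean μ n s ≤ c := by
  simpa [cesaroMean] using inv_mul_sum_range_succ_le hμ n

instance isProbabilityMeasure_cesaroMean (μ : ℕ → Measure E) [∀ k, IsProbabilityMeasure (μ k)]
    (n : ℕ) : IsProbabilityMeasure (cesaroMean μ n) := ⟨by
  simp only [cesaroMean, Measure.smul_apply, Measure.finsetSum_apply, measure_univ,
    Finset.sum_const, Finset.card_range, nsmul_eq_mul, mul_one, smul_eq_mul, Nat.cast_add,
    Nat.cast_one]
  exact ENNReal.inv_mul_cancel (by positivity) (by finiteness)⟩

lemma integral_cesaroMean {μ : ℕ → Measure E} {f : E → ℝ} (hf : ∀ k, Integrable f (μ k)) (n : ℕ) :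
    ∫ x, f x ∂(cesaroMean μ n) = (n + 1 : ℝ)⁻¹ * ∑ k ∈ Finset.range (n + 1), ∫ x, f x ∂(μ k) := by
  rw [cesaroMean, integral_smul_measure, integral_finsetSum_measure fun k _ => hf k, smul_eq_mul]
  simp [ENNReal.toReal_add]

lemma exists_forall_lintegral_le_of_drift {κ : Kernel E E} {V : E → ℝ≥0∞} (hVm : Measurable V)
    {ρ c : ℝ≥0∞} (hρ : ρ < 1) (hc : c ≠ ∞) (hdrift : ∀ x, ∫⁻ y, V y ∂(κ x) ≤ ρ * V x + c)
    {μ : ℕ → Measure E} [∀ k, IsProbabilityMeasure (μ k)] (hμ : ∀ k, μ (k + 1) = (μ k).bind κ)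
    (h₀ : ∫⁻ x, V x ∂(μ 0) ≠ ∞) : ∃ R ≠ ∞, ∀ k, ∫⁻ x, V x ∂(μ k) ≤ R := by
  set R : ℝ≥0∞ := ∫⁻ x, V x ∂(μ 0) + c * (1 - ρ)⁻¹
  have one_sub_ne_zero : 1 - ρ ≠ 0 := (tsub_pos_of_lt hρ).ne'
  have drift_R : ρ * R + c ≤ R :=
    calc ρ * R + c
        = ρ * ∫⁻ x, V x ∂(μ 0) + c * (ρ * (1 - ρ)⁻¹ + (1 - ρ) * (1 - ρ)⁻¹) := by
          rw [ENNReal.mul_inv_cancel one_sub_ne_zero (by finiteness)]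
          ring
      _ = ρ * ∫⁻ x, V x ∂(μ 0) + c * (1 - ρ)⁻¹ := by
          rw [← add_mul, add_tsub_cancel_of_le hρ.le, one_mul]
      _ ≤ R := add_le_add_left (mul_le_of_le_one_left' hρ.le) _
  refine ⟨R, ENNReal.add_ne_top.2
    ⟨h₀, ENNReal.mul_ne_top hc (ENNReal.inv_ne_top.2 one_sub_ne_zero)⟩, fun k => ?_⟩
  induction k with
  | zero => exact le_self_add
  | succ k ih =>
    rw [hμ, Measure.lintegral_bind κ.aemeasurable hVm.aemeasurable]
    calc ∫⁻ x, ∫⁻ y, V y ∂(κ x) ∂(μ k) ≤ ∫⁻ x, (ρ * V x + c) ∂(μ k) := lintegral_mono hdrift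
      _ = ρ * ∫⁻ x, V x ∂(μ k) + c := by
          rw [lintegral_add_right _ measurable_const, lintegral_const_mul _ hVm]
          simp
      _ ≤ ρ * R + c := by gcongr
      _ ≤ R := drift_R

variable [TopologicalSpace E]

lemma isTightMeasureSet_of_lintegral_le {V : E → ℝ≥0∞} (hVm : Measurable V)
    (hV : Tendsto V (cocompact E) (𝓝 ∞)) {S : Set (Measure E)} {R : ℝ≥0∞} (hR : R ≠ ∞)
    (hS : ∀ μ ∈ S, ∫⁻ x, V x ∂μ ≤ R) : IsTightMeasureSet S := by
  rw [isTightMeasureSet_iff_exists_isCompact_measure_compl_le]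
  intro ε hε
  obtain rfl | hε_top := eq_or_ne ε ∞
  · exact ⟨∅, isCompact_empty, fun μ _ => le_top⟩
  have level_ne_top : R / ε + 1 ≠ ∞ :=
    ENNReal.add_ne_top.2 ⟨ENNReal.div_ne_top hR hε.ne', ENNReal.one_ne_top⟩
  obtain ⟨K, hK, hKV⟩ := mem_cocompact.1 (hV (lt_mem_nhds level_ne_top.lt_top))
  refine ⟨K, hK, fun μ hμ => ?_⟩
  calc μ Kᶜ ≤ μ {x | R / ε + 1 ≤ V x} :=
        measure_mono fun x hx => (show R / ε + 1 < V x from hKV hx).le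
    _ ≤ (∫⁻ x, V x ∂μ) / (R / ε + 1) :=
        meas_ge_le_lintegral_div hVm.aemeasurable (by positivity) level_ne_top
    _ ≤ R / (R / ε + 1) := by gcongr; exact hS μ hμ
    _ ≤ ε := ENNReal.div_le_of_le_mul <| by
        rw [mul_add, ENNReal.mul_div_cancel hε.ne' hε_top]
        exact le_self_add

lemma isTightMeasureSet_range_cesaroMean {μ : ℕ → Measure E}
    (hμ : IsTightMeasureSet (range μ)) : IsTightMeasureSet (range (cesaroMean μ)) := by
  rw [isTightMeasureSet_iff_exists_isCompact_measure_compl_le] at hμ ⊢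
  intro ε hε
  obtain ⟨K, hK, hKμ⟩ := hμ ε hε
  refine ⟨K, hK, ?_⟩
  rintro _ ⟨n, rfl⟩
  exact cesaroMean_apply_le (fun k => hKμ _ ⟨k, rfl⟩) n

/-- A kernel has the Feller property if it maps bounded continuous functions to continuous
functions. -/
def IsFeller (κ : Kernel E E) : Prop :=
  ∀ f : E →ᵇ ℝ, Continuous fun x => ∫ y, f y ∂(κ x)

lemma tendsto_integral_cesaroMean_sub [OpensMeasurableSpace E] {κ : Kernel E E}
    [IsMarkovKernel κ] {μ : ℕ → Measure E} [∀ k, IsProbabilityMeasure (μ k)]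
    (hμ : ∀ k, μ (k + 1) = (μ k).bind κ) (f : E →ᵇ ℝ)
    (hκf : Continuous fun x => ∫ y, f y ∂(κ x)) :
    Tendsto (fun n => ∫ x, ∫ y, f y ∂(κ x) ∂(cesaroMean μ n) - ∫ x, f x ∂(cesaroMean μ n))
      atTop (𝓝 0) := by
  have bound (ν : Measure E) [IsProbabilityMeasure ν] : ‖∫ x, f x ∂ν‖ ≤ ‖f‖ :=
    f.norm_integral_le_norm ν
  have integrable_κf (k : ℕ) : Integrable (fun x => ∫ y, f y ∂(κ x)) (μ k) :=
    .of_bound hκf.aestronglyMeasurable ‖f‖ (.of_forall fun x => bound (κ x))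
  have telescope (n : ℕ) : ∫ x, ∫ y, f y ∂(κ x) ∂(cesaroMean μ n) - ∫ x, f x ∂(cesaroMean μ n)
      = (n + 1 : ℝ)⁻¹ * (∫ x, f x ∂(μ (n + 1)) - ∫ x, f x ∂(μ 0)) := by
    rw [integral_cesaroMean integrable_κf, integral_cesaroMean fun k => f.integrable (μ k),
      ← mul_sub, ← Finset.sum_sub_distrib, ← Finset.sum_range_sub fun k => ∫ x, f x ∂(μ k)]
    congr 1
    refine Finset.sum_congr rfl fun k _ => ?_
    rw [← integral_bind_kernel (hμ k ▸ f.integrable (μ (k + 1))), ← hμ k]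
  simp only [telescope]
  refine squeeze_zero_norm (a := fun n : ℕ => 1 / ((n : ℝ) + 1) * (‖f‖ + ‖f‖)) (fun n => ?_) ?_
  · rw [norm_mul, norm_inv, Real.norm_of_nonneg (by positivity : (0 : ℝ) ≤ n + 1), one_div]
    gcongr
    exact (norm_sub_le _ _).trans (add_le_add (bound _) (bound _))
  · simpa using tendsto_one_div_add_atTop_nhds_zero_nat.mul_const (‖f‖ + ‖f‖)

variable [T2Space E] [BorelSpace E] [HasOuterApproxClosed E]

theorem exists_invariant_of_isFeller_of_isTightMeasureSet {κ : Kernel E E} [IsMarkovKernel κ]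
    (hκ : IsFeller κ) {μ : ℕ → Measure E} [∀ k, IsProbabilityMeasure (μ k)]
    (hμ : ∀ k, μ (k + 1) = (μ k).bind κ) (htight : IsTightMeasureSet (range μ)) :
    ∃ π : Measure E, IsProbabilityMeasure π ∧ κ.Invariant π := by
  let ν (n : ℕ) : ProbabilityMeasure E := ⟨cesaroMean μ n, inferInstance⟩
  have compact : IsCompact (closure (range ν)) := by
    refine isCompact_closure_of_isTightMeasureSet
      ((isTightMeasureSet_range_cesaroMean htight).subset ?_)
    rintro _ ⟨_, ⟨n, rfl⟩, rfl⟩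
    exact ⟨n, rfl⟩
  obtain ⟨π, -, hπ⟩ := compact.ultrafilter_le_nhds ((hyperfilter ℕ).map ν)
    (le_principal_iff.2 <| mem_map.2 <| univ_mem' fun n => subset_closure ⟨n, rfl⟩)
  have tendsto_π (f : E →ᵇ ℝ) : Tendsto (fun n => ∫ x, f x ∂(cesaroMean μ n))
      (hyperfilter ℕ) (𝓝 (∫ x, f x ∂(π : Measure E))) :=
    ProbabilityMeasure.tendsto_iff_forall_integral_tendsto.1 hπ f
  refine ⟨π, inferInstance, ext_of_forall_integral_eq_of_IsFiniteMeasure fun f => ?_⟩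
  let κf : E →ᵇ ℝ := .ofNormedAddCommGroup (fun x => ∫ y, f y ∂(κ x)) (hκ f) ‖f‖
    fun x => f.norm_integral_le_norm (κ x)
  have drift_vanishes : Tendsto
      (fun n => ∫ x, κf x ∂(cesaroMean μ n) - ∫ x, f x ∂(cesaroMean μ n)) (hyperfilter ℕ) (𝓝 0) :=
    (tendsto_integral_cesaroMean_sub hμ f (hκ f)).mono_left Nat.hyperfilter_le_atTop
  rw [integral_bind_kernel (f.integrable _)]
  exact sub_eq_zero.1 (tendsto_nhds_unique ((tendsto_π κf).sub (tendsto_π f)) drift_vanishes)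

theorem exists_invariant_of_isFeller_of_lintegral_le {κ : Kernel E E} [IsMarkovKernel κ]
    (hκ : IsFeller κ) {V : E → ℝ≥0∞} (hVm : Measurable V) (hV : Tendsto V (cocompact E) (𝓝 ∞))
    {ρ c : ℝ≥0∞} (hρ : ρ < 1) (hc : c ≠ ∞) (hdrift : ∀ x, ∫⁻ y, V y ∂(κ x) ≤ ρ * V x + c)
    {x₀ : E} (hx₀ : V x₀ ≠ ∞) : ∃ π : Measure E, IsProbabilityMeasure π ∧ κ.Invariant π := by
  set μ : ℕ → Measure E := fun k => (fun ν => ν.bind κ)^[k] (Measure.dirac x₀)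
  have μ_succ (k : ℕ) : μ (k + 1) = (μ k).bind κ := Function.iterate_succ_apply' _ _ _
  have prob (k : ℕ) : IsProbabilityMeasure (μ k) := by
    induction k with
    | zero => exact inferInstanceAs (IsProbabilityMeasure (Measure.dirac x₀))
    | succ k ih => rw [μ_succ]; infer_instance
  obtain ⟨R, hR, moment⟩ := exists_forall_lintegral_le_of_drift hVm hρ hc hdrift μ_succ
    ((lintegral_dirac' x₀ hVm).trans_ne hx₀)
  refine exists_invariant_of_isFeller_of_isTightMeasureSet hκ μ_succ
    (isTightMeasureSet_of_lintegral_le hVm hV hR ?_)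
  rintro _ ⟨k, rfl⟩
  exact moment k

end KrylovBogoliubov

section FiberHolder

open Filter Topology
open scoped NNReal

variable {E ι : Type*} [PseudoMetricSpace E] {w : ι → ℝ≥0} {p C : ℝ≥0} {B : ℝ} {f : E × ι → ℝ}

/-- The class of test functions on `E × ι` that are bounded by `B` and whose restriction to the
fibre over `i` is `p`-Hölder with constant `C * w i`. -/
structure FiberHolder (w : ι → ℝ≥0) (p C : ℝ≥0) (B : ℝ) (f : E × ι → ℝ) : Prop where
  abs_le : ∀ q, |f q| ≤ B
  holderWith : ∀ i, HolderWith (C * w i) p fun x => f (x, i)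

namespace FiberHolder

lemma continuous [TopologicalSpace ι] [DiscreteTopology ι] (hf : FiberHolder w p C B f)
    (hp : 0 < p) : Continuous f :=
  continuous_prod_of_discrete_right.2 fun i => (hf.holderWith i).continuous hp

lemma integrable [TopologicalSpace ι] [DiscreteTopology ι] [MeasurableSpace (E × ι)]
    [OpensMeasurableSpace (E × ι)] (hf : FiberHolder w p C B f) (hp : 0 < p) (π : Measure (E × ι))
    [IsFiniteMeasure π] : Integrable f π :=
  .of_bound (hf.continuous hp).measurable.aestronglyMeasurable B (.of_forall hf.abs_le)

lemma abs_sub_le (hf : FiberHolder w p C B f) (x y : E) (i : ι) :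
    |f (x, i) - f (y, i)| ≤ C * w i * dist x y ^ (p : ℝ) :=
  (hf.holderWith i).dist_le x y

lemma iterate {T : (E × ι → ℝ) → E × ι → ℝ} {ρ : ℝ≥0}
    (hT : ∀ C f, FiberHolder w p C B f → FiberHolder w p (ρ * C) B (T f))
    (hf : FiberHolder w p C B f) (k : ℕ) : FiberHolder w p (ρ ^ k * C) B (T^[k] f) := by
  induction k with
  | zero => simpa using hf
  | succ k ih =>
    rw [Function.iterate_succ_apply', pow_succ', mul_assoc]
    exact hT _ _ ih

end FiberHolder

lemma exists_fiberHolder_of_lipschitzWith [Finite ι] (hw : ∀ i, w i ≠ 0) (hp : p ≤ 1) {K : ℝ≥0}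
    {B : ℝ} (hB : ∀ q, |f q| ≤ B) (hf : ∀ i, LipschitzWith K fun x => f (x, i)) :
    ∃ C, FiberHolder w p C B f := by
  cases nonempty_fintype ι
  set A : ℝ≥0 := max (Real.toNNReal (2 * B)) K
  refine ⟨A * ∑ i, (w i)⁻¹, hB, fun i => ?_⟩
  have bounded : HolderWith (Real.toNNReal (2 * B)) 0 fun x => f (x, i) := fun x y => by
    rw [NNReal.coe_zero, ENNReal.rpow_zero, mul_one, edist_dist]
    exact ENNReal.ofReal_le_ofReal <| (dist_le_norm_add_norm _ _).trans <|
      (add_le_add (hB _) (hB _)).trans_eq (two_mul B).symm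
  refine (bounded.of_le_of_le (holderWith_one.2 (hf i)) zero_le hp).mono ?_
  calc A = A * ((w i)⁻¹ * w i) := by rw [inv_mul_cancel₀ (hw i), mul_one]
    _ ≤ A * ((∑ j, (w j)⁻¹) * w i) := by
        gcongr
        exact Finset.single_le_sum (f := fun j => (w j)⁻¹) (fun _ _ => zero_le) (Finset.mem_univ i)
    _ = A * (∑ j, (w j)⁻¹) * w i := (mul_assoc _ _ _).symm

variable [TopologicalSpace ι] [DiscreteTopology ι] [MeasurableSpace (E × ι)]

lemma ext_of_forall_fiberHolder_integral_eq [Finite ι] [BorelSpace (E × ι)]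
    (hw : ∀ i, w i ≠ 0) (hp : p ≤ 1) {π π' : Measure (E × ι)}
    [IsProbabilityMeasure π] [IsProbabilityMeasure π']
    (h : ∀ C B f, FiberHolder w p C B f → ∫ q, f q ∂π = ∫ q, f q ∂π') : π = π' := by
  let := TopologicalSpace.metrizableSpaceMetric ι
  have : Nonempty (E × ι) := nonempty_of_isProbabilityMeasure π
  let P : ProbabilityMeasure (E × ι) := ⟨π, inferInstance⟩
  let P' : ProbabilityMeasure (E × ι) := ⟨π', inferInstance⟩
  have tendsto_P' : Tendsto (fun _ : ℕ => P) atTop (𝓝 P') := by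
    refine tendsto_iff_forall_lipschitz_integral_tendsto.2 ?_
    rintro f ⟨M, hM⟩ ⟨K, hK⟩
    obtain ⟨q₀⟩ := this
    have hB (q : E × ι) : |f q| ≤ M + |f q₀| :=
      (norm_le_norm_sub_add (f q) (f q₀)).trans (add_le_add_left (hM q q₀) _)
    have lipschitz (i : ι) : LipschitzWith K fun x => f (x, i) := by
      simpa [Function.comp_def] using hK.comp (LipschitzWith.prodMk_right i)
    obtain ⟨C, hC⟩ := exists_fiberHolder_of_lipschitzWith hw hp hB lipschitz
    exact tendsto_const_nhds.congr fun _ => (h C _ f hC).symm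
  have P_eq : P = P' := tendsto_nhds_unique tendsto_const_nhds tendsto_P'
  exact congrArg Subtype.val P_eq

lemma tendsto_integral_sub_fiberHolder [OpensMeasurableSpace (E × ι)] (hp : 0 < p)
    {c : ℕ → ℝ≥0} (hc : Tendsto c atTop (𝓝 0)) {f : ℕ → E × ι → ℝ}
    (hf : ∀ k, FiberHolder w p (c k) B (f k)) (x₀ : E) (π : Measure (E × ι)) [IsFiniteMeasure π] :
    Tendsto (fun k => ∫ q, (f k q - f k (x₀, q.2)) ∂π) atTop (𝓝 0) := by
  rw [← integral_zero (E × ι) ℝ (μ := π)]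
  refine tendsto_integral_of_dominated_convergence (fun _ => 2 * B) (fun k => ?_)
    (integrable_const _) (fun k => .of_forall fun q => ?_) (.of_forall fun q => ?_)
  · have continuous := (hf k).continuous hp
    exact (continuous.sub (by fun_prop)).measurable.aestronglyMeasurable
  · exact (norm_sub_le _ _).trans <|
      (add_le_add ((hf k).abs_le _) ((hf k).abs_le _)).trans_eq (two_mul B).symm
  · have bound_tendsto :
        Tendsto (fun k => (c k : ℝ) * w q.2 * dist q.1 x₀ ^ (p : ℝ)) atTop (𝓝 0) := by
      simpa using ((NNReal.tendsto_coe.2 hc).mul_const (w q.2 : ℝ)).mul_const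
        (dist q.1 x₀ ^ (p : ℝ))
    exact squeeze_zero_norm (fun k => (hf k).abs_sub_le q.1 x₀ q.2) bound_tendsto

variable [MeasurableSpace ι] [BorelSpace ι]

lemma tendsto_integral_map_snd_fiberHolder [OpensMeasurableSpace (E × ι)] (hp : 0 < p)
    {c : ℕ → ℝ≥0} (hc : Tendsto c atTop (𝓝 0)) {f : ℕ → E × ι → ℝ}
    (hf : ∀ k, FiberHolder w p (c k) B (f k)) (x₀ : E) {π : Measure (E × ι)}
    [IsFiniteMeasure π] {I : ℝ} (hI : ∀ k, ∫ q, f k q ∂π = I) :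
    Tendsto (fun k => ∫ i, f k (x₀, i) ∂(π.map Prod.snd)) atTop (𝓝 I) := by
  have integral_map_snd (k : ℕ) : ∫ i, f k (x₀, i) ∂(π.map Prod.snd)
      = I - ∫ q, (f k q - f k (x₀, q.2)) ∂π := by
    have integrable_section : Integrable (fun q : E × ι => f k (x₀, q.2)) π :=
      .of_bound (((hf k).continuous hp).comp
        (by fun_prop : Continuous fun q : E × ι => (x₀, q.2))).measurable.aestronglyMeasurable
        B (.of_forall fun q => (hf k).abs_le _)
    rw [integral_map continuous_snd.aemeasurable
      continuous_of_discreteTopology.measurable.aestronglyMeasurable,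
      integral_sub ((hf k).integrable hp π) integrable_section, hI, sub_sub_cancel]
  simpa only [integral_map_snd, sub_zero] using
    (tendsto_integral_sub_fiberHolder hp hc hf x₀ π).const_sub I

theorem eq_of_invariant_of_fiberHolder_contraction [Finite ι] [BorelSpace (E × ι)]
    {κ : Kernel (E × ι) (E × ι)} (hw : ∀ i, w i ≠ 0) (hp : 0 < p) (hp1 : p ≤ 1) {ρ : ℝ≥0}
    (hρ : ρ < 1)
    (hκ : ∀ C B f, FiberHolder w p C B f → FiberHolder w p (ρ * C) B fun q => ∫ r, f r ∂(κ q))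
    {π π' : Measure (E × ι)} [IsProbabilityMeasure π] [IsProbabilityMeasure π']
    (hπ : κ.Invariant π) (hπ' : κ.Invariant π') (hsnd : π.map Prod.snd = π'.map Prod.snd) :
    π = π' := by
  refine ext_of_forall_fiberHolder_integral_eq hw hp1 fun C B f hf => ?_
  obtain ⟨x₀, -⟩ := nonempty_of_isProbabilityMeasure π
  set T : (E × ι → ℝ) → E × ι → ℝ := fun f q => ∫ r, f r ∂(κ q)
  have fiberHolder (k : ℕ) : FiberHolder w p (ρ ^ k * C) B (T^[k] f) :=
    hf.iterate (fun C f => hκ C B f) k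
  have constant_tendsto : Tendsto (fun k => ρ ^ k * C) atTop (𝓝 0) := by
    simpa using (NNReal.tendsto_pow_atTop_nhds_zero_of_lt_one hρ).mul_const C
  have integral_iterate {m : Measure (E × ι)} [IsProbabilityMeasure m] (hm : κ.Invariant m)
      (k : ℕ) : ∫ q, (T^[k] f) q ∂m = ∫ q, f q ∂m := by
    induction k with
    | zero => rfl
    | succ k ih =>
      rw [Function.iterate_succ_apply', ← ih, ← integral_bind_kernel, hm.def]
      exact hm.def.symm ▸ (fiberHolder k).integrable hp m
  have tendsto_section {m : Measure (E × ι)} [IsProbabilityMeasure m] (hm : κ.Invariant m) :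
      Tendsto (fun k => ∫ i, (T^[k] f) (x₀, i) ∂(m.map Prod.snd)) atTop (𝓝 (∫ q, f q ∂m)) :=
    tendsto_integral_map_snd_fiberHolder hp constant_tendsto fiberHolder x₀ (integral_iterate hm)
  exact tendsto_nhds_unique (tendsto_section hπ) (hsnd ▸ tendsto_section hπ')

end FiberHolder

section SwitchingKernel

open Filter Topology
open scoped NNReal ENNReal BoundedContinuousFunction

lemma tendsto_weight_mul_edist_rpow_cocompact {E ι : Type*} [PseudoMetricSpace E] [ProperSpace E]
    [Finite ι] [TopologicalSpace ι] {w : ι → ℝ≥0} (hw : ∀ i, w i ≠ 0) {p : ℝ≥0} (hp : 0 < p)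
    (x₀ : E) :
    Tendsto (fun q : E × ι => (w q.2 : ℝ≥0∞) * edist q.1 x₀ ^ (p : ℝ)) (cocompact (E × ι))
      (𝓝 ∞) := by
  have fibre (i : ι) :
      Tendsto (fun x => (w i : ℝ≥0∞) * edist x x₀ ^ (p : ℝ)) (cocompact E) (𝓝 ∞) := by
    have edist_tendsto : Tendsto (fun x => edist x x₀) (cocompact E) (𝓝 ∞) := by
      simp only [edist_dist]
      exact ENNReal.tendsto_ofReal_nhds_top.2 (tendsto_dist_right_cocompact_atTop x₀)
    have rpow_tendsto := (ENNReal.tendsto_rpow_at_top (NNReal.coe_pos.2 hp)).comp edist_tendsto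
    simpa [ENNReal.mul_top, hw i] using
      ENNReal.Tendsto.const_mul (a := (w i : ℝ≥0∞)) rpow_tendsto (.inl ENNReal.top_ne_zero)
  rw [← coprod_cocompact, cocompact_eq_bot (X := ι), coprod_bot]
  refine ENNReal.tendsto_nhds_top_iff_nnreal.2 fun c => ?_
  have eventually_lt : ∀ᶠ x in cocompact E, ∀ i, (c : ℝ≥0∞) < w i * edist x x₀ ^ (p : ℝ) :=
    eventually_all.2 fun i => ENNReal.tendsto_nhds_top_iff_nnreal.1 (fibre i) c
  exact (eventually_lt.comap Prod.fst).mono fun q hq => hq q.2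

variable {E ι Ω : Type*} [MeasurableSpace E] [MeasurableSpace ι] [MeasurableSpace Ω]
  {Φ : E × ι → Ω → E} {ν : Measure Ω} {R : Kernel ι ι}

/-- One step of a random recursion with Markovian switching: from `(x, i)` the chain moves to
`(Φ (x, i) z, j)` with independent noise `z ∼ ν` and new regime `j ∼ R i`. As for `Kernel.map`, the
value is junk unless `Φ` is jointly measurable. -/
noncomputable def switchingKernel (Φ : E × ι → Ω → E) (ν : Measure Ω) (R : Kernel ι ι) :
    Kernel (E × ι) (E × ι) :=
  (Kernel.id ×ₖ (Kernel.const _ ν ×ₖ R.comap Prod.snd measurable_snd)).map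
    fun r => (Φ r.1 r.2.1, r.2.2)

lemma switchingKernel_apply [SFinite ν] [IsSFiniteKernel R] (hΦ : Measurable Φ.uncurry)
    (q : E × ι) :
    switchingKernel Φ ν R q = (ν.prod (R q.2)).map fun zj => (Φ q zj.1, zj.2) := by
  have measurable_step : Measurable fun r : (E × ι) × Ω × ι => (Φ r.1 r.2.1, r.2.2) :=
    (hΦ.comp (by fun_prop : Measurable fun r : (E × ι) × Ω × ι => (r.1, r.2.1))).prodMk
      (by fun_prop)
  rw [switchingKernel, Kernel.map_apply _ measurable_step, Kernel.prod_apply, Kernel.prod_apply,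
    Kernel.id_apply, Kernel.const_apply, Kernel.comap_apply, Measure.dirac_prod,
    Measure.map_map measurable_step measurable_prodMk_left]
  rfl

lemma measurable_switchingStep (hΦ : Measurable Φ.uncurry) (q : E × ι) :
    Measurable fun zj : Ω × ι => (Φ q zj.1, zj.2) :=
  (hΦ.comp (by fun_prop : Measurable fun zj : Ω × ι => (q, zj.1))).prodMk measurable_snd

lemma map_snd_switchingKernel [IsProbabilityMeasure ν] [IsMarkovKernel R]
    (hΦ : Measurable Φ.uncurry) :
    (switchingKernel Φ ν R).map Prod.snd = R.comap Prod.snd measurable_snd := by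
  ext1 q
  rw [Kernel.map_apply _ measurable_snd, Kernel.comap_apply, switchingKernel_apply hΦ,
    Measure.map_map measurable_snd (measurable_switchingStep hΦ q)]
  change (ν.prod (R q.2)).snd = R q.2
  exact Measure.snd_prod

lemma isMarkovKernel_switchingKernel [IsProbabilityMeasure ν] [IsMarkovKernel R]
    (hΦ : Measurable Φ.uncurry) : IsMarkovKernel (switchingKernel Φ ν R) where
  isProbabilityMeasure q := by
    rw [switchingKernel_apply hΦ q]
    exact Measure.isProbabilityMeasure_map (measurable_switchingStep hΦ q).aemeasurable

lemma invariant_map_snd_of_invariant_switchingKernel [IsProbabilityMeasure ν] [IsMarkovKernel R]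
    (hΦ : Measurable Φ.uncurry) {π : Measure (E × ι)} (hπ : (switchingKernel Φ ν R).Invariant π) :
    R.Invariant (π.map Prod.snd) := by
  calc (π.map Prod.snd).bind R = π.bind (R.comap Prod.snd measurable_snd) := by
        rw [← Measure.deterministic_comp_eq_map measurable_snd, Measure.comp_assoc,
          Kernel.comp_deterministic_eq_comap]
    _ = (π.bind (switchingKernel Φ ν R)).map Prod.snd := by
        rw [← map_snd_switchingKernel (ν := ν) hΦ, Measure.map_comp _ _ measurable_snd]
    _ = π.map Prod.snd := by rw [hπ.def]

lemma lintegral_mul_switchingKernel [SFinite ν] [IsSFiniteKernel R] (hΦ : Measurable Φ.uncurry)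
    (q : E × ι) {g : ι → ℝ≥0∞} (hg : Measurable g) {u : E → ℝ≥0∞} (hu : Measurable u) :
    ∫⁻ r, g r.2 * u r.1 ∂(switchingKernel Φ ν R q)
      = (∫⁻ j, g j ∂(R q.2)) * ∫⁻ z, u (Φ q z) ∂ν := by
  have measurable_Φ : Measurable (Φ q) := hΦ.comp measurable_prodMk_left
  rw [switchingKernel_apply hΦ, lintegral_map (by fun_prop) (measurable_switchingStep hΦ q)]
  simp only [mul_comm (g _)]
  exact (lintegral_prod_mul (hu.comp measurable_Φ).aemeasurable hg.aemeasurable).trans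
    (mul_comm _ _)

lemma integral_switchingKernel [SFinite ν] [IsSFiniteKernel R] (hΦ : Measurable Φ.uncurry)
    (q : E × ι) {f : E × ι → ℝ} (hf : Measurable f) :
    ∫ r, f r ∂(switchingKernel Φ ν R q) = ∫ zj, f (Φ q zj.1, zj.2) ∂(ν.prod (R q.2)) := by
  rw [switchingKernel_apply hΦ]
  exact integral_map (measurable_switchingStep hΦ q).aemeasurable hf.aestronglyMeasurable

lemma isFeller_switchingKernel [TopologicalSpace E] [FirstCountableTopology E]
    [TopologicalSpace ι] [DiscreteTopology ι] [OpensMeasurableSpace (E × ι)]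
    [IsFiniteMeasure ν] [IsFiniteKernel R] (hΦ : Measurable Φ.uncurry)
    (hΦc : ∀ i z, Continuous fun x => Φ (x, i) z) :
    IsFeller (switchingKernel Φ ν R) := by
  intro f
  simp only [integral_switchingKernel hΦ _ f.continuous.measurable]
  refine continuous_prod_of_discrete_right.2 fun i =>
    continuous_of_dominated (μ := ν.prod (R i)) (bound := fun _ => ‖f‖) (fun x => ?_)
      (fun x => .of_forall fun zj => f.norm_coe_le_norm _) (integrable_const _)
      (.of_forall fun zj => ?_)
  · exact (f.continuous.measurable.comp (measurable_switchingStep hΦ (x, i))).aestronglyMeasurable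
  · exact f.continuous.comp ((hΦc i zj.1).prodMk continuous_const)

/-- Synchronously coupled steps from `(x, i)` and `(y, i)` contract, on average over the noise and
the new regime, the `p`-th power of the distance weighted by the regime `i ↦ w i`. -/
def IsAverageContraction [EDist E] (Φ : E × ι → Ω → E) (ν : Measure Ω) (R : Kernel ι ι)
    (w : ι → ℝ≥0) (p ρ : ℝ≥0) : Prop :=
  ∀ i x y, (∫⁻ j, w j ∂(R i)) * ∫⁻ z, edist (Φ (x, i) z) (Φ (y, i) z) ^ (p : ℝ) ∂ν
    ≤ ρ * w i * edist x y ^ (p : ℝ)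

section Contraction

variable [PseudoMetricSpace E] [SecondCountableTopology E] [BorelSpace E]
  [TopologicalSpace ι] [DiscreteTopology ι] [BorelSpace ι] [IsProbabilityMeasure ν]
  [IsMarkovKernel R] {w : ι → ℝ≥0} {p ρ : ℝ≥0}

lemma fiberHolder_integral_switchingKernel [Finite ι] (hΦ : Measurable Φ.uncurry) (hp : 0 < p)
    (hcontr : IsAverageContraction Φ ν R w p ρ) {C : ℝ≥0} {B : ℝ} {f : E × ι → ℝ}
    (hf : FiberHolder w p C B f) :
    FiberHolder w p (ρ * C) B fun q => ∫ r, f r ∂(switchingKernel Φ ν R q) := by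
  have := isMarkovKernel_switchingKernel (ν := ν) (R := R) hΦ
  refine ⟨fun q => ?_, fun i x y => ?_⟩
  · simpa using norm_integral_le_of_norm_le_const (μ := switchingKernel Φ ν R q)
      (.of_forall fun r => (Real.norm_eq_abs (f r)).trans_le (hf.abs_le r))
  have measurable_f : Measurable f := (hf.continuous hp).measurable
  have measurable_Φ (x : E) : Measurable (Φ (x, i)) := hΦ.comp measurable_prodMk_left
  have integrable (x : E) :
      Integrable (fun zj : Ω × ι => f (Φ (x, i) zj.1, zj.2)) (ν.prod (R i)) :=
    .of_bound (measurable_f.comp (measurable_switchingStep hΦ (x, i))).aestronglyMeasurable B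
      (.of_forall fun _ => hf.abs_le _)
  calc edist (∫ r, f r ∂(switchingKernel Φ ν R (x, i))) (∫ r, f r ∂(switchingKernel Φ ν R (y, i)))
      = ‖∫ zj, (f (Φ (x, i) zj.1, zj.2) - f (Φ (y, i) zj.1, zj.2)) ∂(ν.prod (R i))‖ₑ := by
        rw [integral_switchingKernel hΦ _ measurable_f, integral_switchingKernel hΦ _ measurable_f,
          integral_sub (integrable x) (integrable y), edist_eq_enorm_sub]
    _ ≤ ∫⁻ zj, C * (edist (Φ (x, i) zj.1) (Φ (y, i) zj.1) ^ (p : ℝ) * w zj.2) ∂(ν.prod (R i)) := by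
        refine (enorm_integral_le_lintegral_enorm _).trans (lintegral_mono fun zj => ?_)
        rw [← edist_eq_enorm_sub]
        refine (hf.holderWith zj.2 _ _).trans_eq ?_
        rw [ENNReal.coe_mul]
        ring
    _ = C * ((∫⁻ j, w j ∂(R i)) * ∫⁻ z, edist (Φ (x, i) z) (Φ (y, i) z) ^ (p : ℝ) ∂ν) := by
        have measurable_edist : Measurable fun z => edist (Φ (x, i) z) (Φ (y, i) z) ^ (p : ℝ) :=
          ((measurable_Φ x).edist (measurable_Φ y)).pow_const _
        rw [lintegral_const_mul' _ _ ENNReal.coe_ne_top,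
          lintegral_prod_mul measurable_edist.aemeasurable
            (measurable_of_finite fun j => (w j : ℝ≥0∞)).aemeasurable,
          mul_comm (lintegral ν _)]
    _ ≤ C * (ρ * w i * edist x y ^ (p : ℝ)) := by
        gcongr (C : ℝ≥0∞) * ?_
        exact hcontr i x y
    _ = (ρ * C * w i : ℝ≥0) * edist x y ^ (p : ℝ) := by
        push_cast
        ring

lemma lintegral_edist_rpow_switchingKernel_le [Fintype ι] (hΦ : Measurable Φ.uncurry) (hp1 : p ≤ 1)
    (hcontr : IsAverageContraction Φ ν R w p ρ) (x₀ : E) (q : E × ι) :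
    ∫⁻ r, w r.2 * edist r.1 x₀ ^ (p : ℝ) ∂(switchingKernel Φ ν R q)
      ≤ ρ * (w q.2 * edist q.1 x₀ ^ (p : ℝ))
        + ∑ i, (∫⁻ j, w j ∂(R i)) * ∫⁻ z, edist (Φ (x₀, i) z) x₀ ^ (p : ℝ) ∂ν := by
  obtain ⟨x, i⟩ := q
  have measurable_Φ (x : E) : Measurable (Φ (x, i)) := hΦ.comp measurable_prodMk_left
  have triangle : ∫⁻ z, edist (Φ (x, i) z) x₀ ^ (p : ℝ) ∂ν
      ≤ ∫⁻ z, edist (Φ (x, i) z) (Φ (x₀, i) z) ^ (p : ℝ) ∂ν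
        + ∫⁻ z, edist (Φ (x₀, i) z) x₀ ^ (p : ℝ) ∂ν := by
    rw [← lintegral_add_left (((measurable_Φ x).edist (measurable_Φ x₀)).pow_const _)]
    refine lintegral_mono fun z => ?_
    exact (ENNReal.rpow_le_rpow (edist_triangle _ (Φ (x₀, i) z) _) p.2).trans
      (ENNReal.rpow_add_le_add_rpow _ _ p.2 hp1)
  rw [lintegral_mul_switchingKernel (u := fun x => edist x x₀ ^ (p : ℝ)) hΦ _
    (measurable_of_finite fun j => (w j : ℝ≥0∞)) (by fun_prop)]
  calc (∫⁻ j, w j ∂(R i)) * ∫⁻ z, edist (Φ (x, i) z) x₀ ^ (p : ℝ) ∂ν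
      ≤ (∫⁻ j, w j ∂(R i)) * ∫⁻ z, edist (Φ (x, i) z) (Φ (x₀, i) z) ^ (p : ℝ) ∂ν
        + (∫⁻ j, w j ∂(R i)) * ∫⁻ z, edist (Φ (x₀, i) z) x₀ ^ (p : ℝ) ∂ν := by
        rw [← mul_add]
        gcongr
    _ ≤ ρ * (w i * edist x x₀ ^ (p : ℝ))
        + ∑ i, (∫⁻ j, w j ∂(R i)) * ∫⁻ z, edist (Φ (x₀, i) z) x₀ ^ (p : ℝ) ∂ν := by
        rw [← mul_assoc (ρ : ℝ≥0∞)]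
        exact add_le_add (hcontr i x x₀) <| Finset.single_le_sum
          (f := fun i => (∫⁻ j, w j ∂(R i)) * ∫⁻ z, edist (Φ (x₀, i) z) x₀ ^ (p : ℝ) ∂ν)
          (fun _ _ => zero_le) (Finset.mem_univ i)

lemma eq_of_invariant_switchingKernel [Finite ι] (hR : ∀ i j, 0 < R i {j})
    (hΦ : Measurable Φ.uncurry) (hw : ∀ i, w i ≠ 0) (hp : 0 < p) (hp1 : p ≤ 1) (hρ : ρ < 1)
    (hcontr : IsAverageContraction Φ ν R w p ρ) {π π' : Measure (E × ι)} [IsProbabilityMeasure π]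
    [IsProbabilityMeasure π'] (hπ : (switchingKernel Φ ν R).Invariant π)
    (hπ' : (switchingKernel Φ ν R).Invariant π') : π = π' := by
  have (m : Measure (E × ι)) [IsProbabilityMeasure m] : IsProbabilityMeasure (m.map Prod.snd) :=
    Measure.isProbabilityMeasure_map measurable_snd.aemeasurable
  exact eq_of_invariant_of_fiberHolder_contraction hw hp hp1 hρ
    (fun C B f => fiberHolder_integral_switchingKernel hΦ hp hcontr) hπ hπ'
    (eq_of_invariant_of_forall_pos hR (invariant_map_snd_of_invariant_switchingKernel hΦ hπ)
      (invariant_map_snd_of_invariant_switchingKernel hΦ hπ'))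

end Contraction

theorem existsUnique_invariant_switchingKernel [MetricSpace E] [ProperSpace E] [BorelSpace E]
    [Finite ι] [Nonempty ι] [MeasurableSingletonClass ι] [IsProbabilityMeasure ν]
    [IsMarkovKernel R] (hR : ∀ i j, 0 < R i {j}) (hΦ : Measurable Φ.uncurry)
    (hΦc : ∀ i z, Continuous fun x => Φ (x, i) z) {x₀ : E} {w : ι → ℝ≥0} {p ρ : ℝ≥0}
    (hmoment : ∀ i, ∫⁻ z, edist (Φ (x₀, i) z) x₀ ^ (p : ℝ) ∂ν ≠ ∞)
    (hw : ∀ i, w i ≠ 0) (hp : 0 < p) (hp1 : p ≤ 1) (hρ : ρ < 1)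
    (hcontr : IsAverageContraction Φ ν R w p ρ) :
    ∃! π : Measure (E × ι), IsProbabilityMeasure π ∧ (switchingKernel Φ ν R).Invariant π := by
  cases nonempty_fintype ι
  let := (⊥ : TopologicalSpace ι)
  have : DiscreteTopology ι := ⟨rfl⟩
  have := isMarkovKernel_switchingKernel (ν := ν) (R := R) hΦ
  refine existsUnique_of_exists_of_unique ?_ fun π π' ⟨_, hπ⟩ ⟨_, hπ'⟩ =>
    eq_of_invariant_switchingKernel hR hΦ hw hp hp1 hρ hcontr hπ hπ'
  have lintegral_weight_ne_top (i : ι) : ∫⁻ j, w j ∂(R i) ≠ ∞ := by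
    rw [lintegral_fintype]
    exact ENNReal.sum_ne_top.2 fun j _ => by finiteness
  exact exists_invariant_of_isFeller_of_lintegral_le (isFeller_switchingKernel hΦ hΦc)
    (by fun_prop) (tendsto_weight_mul_edist_rpow_cocompact hw hp x₀) (ENNReal.coe_lt_one_iff.2 hρ)
    (ENNReal.sum_ne_top.2 fun i _ => ENNReal.mul_ne_top (lintegral_weight_ne_top i) (hmoment i))
    (lintegral_edist_rpow_switchingKernel_le hΦ hp1 hcontr x₀) (x₀ := (x₀, Classical.arbitrary ι))
    (by simp [hp])

end SwitchingKernel

lemma norm_add_smul_rpow_le {F : Type*} [NormedAddCommGroup F] [InnerProductSpace ℝ F] {u v : F}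
    {β L δ p : ℝ} (hδ : 0 ≤ δ) (hp : 0 ≤ p) (hinner : 2 * inner ℝ u v ≤ β * ‖u‖ ^ 2)
    (hnorm : ‖v‖ ≤ L * ‖u‖) :
    ‖u + δ • v‖ ^ p ≤ Real.exp (p / 2 * (β * δ + L ^ 2 * δ ^ 2)) * ‖u‖ ^ p := by
  have sq_le : ‖u + δ • v‖ ^ 2 ≤ Real.exp (β * δ + L ^ 2 * δ ^ 2) * ‖u‖ ^ 2 :=
    calc ‖u + δ • v‖ ^ 2 = ‖u‖ ^ 2 + δ * (2 * inner ℝ u v) + δ ^ 2 * ‖v‖ ^ 2 := by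
          rw [norm_add_sq_real, inner_smul_right, norm_smul, Real.norm_of_nonneg hδ]
          ring
      _ ≤ ‖u‖ ^ 2 + δ * (β * ‖u‖ ^ 2) + δ ^ 2 * (L * ‖u‖) ^ 2 := by gcongr
      _ = (β * δ + L ^ 2 * δ ^ 2 + 1) * ‖u‖ ^ 2 := by ring
      _ ≤ Real.exp (β * δ + L ^ 2 * δ ^ 2) * ‖u‖ ^ 2 := by
          gcongr
          exact Real.add_one_le_exp _
  have rpow_eq (x : F) : ‖x‖ ^ p = (‖x‖ ^ 2) ^ (p / 2) := by
    rw [← Real.rpow_natCast_mul (norm_nonneg x), Nat.cast_ofNat, mul_div_cancel₀ p two_ne_zero]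
  rw [rpow_eq, rpow_eq u, mul_comm (p / 2), Real.exp_mul,
    ← Real.mul_rpow (Real.exp_pos _).le (sq_nonneg _)]
  gcongr

open scoped NNReal ENNReal in
lemma lintegral_edist_rpow_ne_top_of_integrable {Ω F : Type*} [MeasurableSpace Ω]
    [NormedAddCommGroup F] {ν : Measure Ω} [IsFiniteMeasure ν] {f : Ω → F} (hf : Integrable f ν)
    {p : ℝ≥0} (hp : 0 < p) (hp1 : p ≤ 1) : ∫⁻ z, edist (f z) 0 ^ (p : ℝ) ∂ν ≠ ∞ := by
  have memLp : MemLp f p ν :=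
    (memLp_one_iff_integrable.2 hf).mono_exponent (ENNReal.coe_le_one_iff.2 hp1)
  simp only [edist_zero_right]
  exact (lintegral_rpow_enorm_lt_top_of_eLpNorm_lt_top (ENNReal.coe_ne_zero.2 hp.ne')
    ENNReal.coe_ne_top memLp.2).ne

section EulerMaruyama

open scoped NNReal ENNReal
open Matrix

variable {n m N : ℕ}

instance isProbabilityMeasure_stdGaussianPi : IsProbabilityMeasure (stdGaussianPi m) := by
  unfold stdGaussianPi
  infer_instance

lemma integrable_id_stdGaussianPi : Integrable id (stdGaussianPi m) :=
  .of_eval fun k =>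
    (measurePreserving_eval (fun _ => gaussianReal 0 1) k).integrable_comp_of_integrable
      ((memLp_id_gaussianReal 1).integrable le_rfl)

lemma lintegral_rowMeasure (P : Matrix (Fin N) (Fin N) ℝ) (i : Fin N) (g : Fin N → ℝ≥0∞) :
    ∫⁻ j, g j ∂(rowMeasure P i) = ∑ j, ENNReal.ofReal (P i j) * g j := by
  rw [rowMeasure, lintegral_finsetSum_measure]
  simp only [lintegral_smul_measure, lintegral_dirac, smul_eq_mul]

/-- The kernel on `Fin N` whose transition probabilities are the rows of `P`. -/
noncomputable def rowKernel (P : Matrix (Fin N) (Fin N) ℝ) : Kernel (Fin N) (Fin N) :=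
  Kernel.ofFunOfCountable (rowMeasure P)

lemma lintegral_coe_rowKernel {P : Matrix (Fin N) (Fin N) ℝ} (hP : ∀ i j, 0 ≤ P i j)
    (w : Fin N → ℝ≥0) (i : Fin N) :
    ∫⁻ j, w j ∂(rowKernel P i) = ENNReal.ofReal ((P *ᵥ fun j => (w j : ℝ)) i) := by
  calc ∫⁻ j, w j ∂(rowKernel P i) = ∑ j, ENNReal.ofReal (P i j) * w j :=
        lintegral_rowMeasure P i _
    _ = ∑ j, ENNReal.ofReal (P i j * w j) := by
        simp only [ENNReal.ofReal_mul (hP i _), ENNReal.ofReal_coe_nnreal]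
    _ = ENNReal.ofReal (∑ j, P i j * w j) :=
        (ENNReal.ofReal_sum_of_nonneg fun j _ => mul_nonneg (hP i j) (w j).coe_nonneg).symm

lemma isMarkovKernel_rowKernel {P : Matrix (Fin N) (Fin N) ℝ}
    (hP : P ∈ rowStochastic ℝ (Fin N)) : IsMarkovKernel (rowKernel P) where
  isProbabilityMeasure i := ⟨by
    have := lintegral_coe_rowKernel (P := P) (fun _ _ => nonneg_of_mem_rowStochastic hP) 1 i
    simpa [mulVec, dotProduct, sum_row_of_mem_rowStochastic hP] using this⟩

lemma rowKernel_singleton_pos {P : Matrix (Fin N) (Fin N) ℝ} {i j : Fin N} (hP : 0 < P i j) :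
    0 < rowKernel P i {j} := by
  have h := lintegral_rowMeasure P i (({j} : Set (Fin N)).indicator 1)
  rw [lintegral_indicator_one (measurableSet_singleton j)] at h
  change 0 < rowMeasure P i {j}
  rw [h, pos_iff_ne_zero, ne_eq, Finset.sum_eq_zero_iff]
  intro hzero
  simpa [hP.not_ge] using hzero j (Finset.mem_univ j)

/-- The space component `x + δ b(x, i) + √δ σ(x, i) z` of one Euler–Maruyama step from
`q = (x, i)`, as a function of the value `z` of the Gaussian noise. -/
noncomputable def eulerMaruyamaStep
    (b : EuclideanSpace ℝ (Fin n) → Fin N → EuclideanSpace ℝ (Fin n))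
    (σ : EuclideanSpace ℝ (Fin n) → Fin N → Matrix (Fin n) (Fin m) ℝ) (δ : ℝ)
    (q : EuclideanSpace ℝ (Fin n) × Fin N) (z : Fin m → ℝ) : EuclideanSpace ℝ (Fin n) :=
  q.1 + δ • b q.1 q.2 + Real.sqrt δ • WithLp.toLp 2 (σ q.1 q.2 *ᵥ z)

variable {Q : Matrix (Fin N) (Fin N) ℝ}
  {b : EuclideanSpace ℝ (Fin n) → Fin N → EuclideanSpace ℝ (Fin n)}
  {σ : EuclideanSpace ℝ (Fin n) → Fin N → Matrix (Fin n) (Fin m) ℝ} {δ L : ℝ}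

lemma continuous_eulerMaruyamaStep (hb : ∀ i, Continuous fun x => b x i)
    (hσ : ∀ i, Continuous fun x => σ x i) :
    Continuous (eulerMaruyamaStep b σ δ).uncurry := by
  have continuous_b : Continuous fun q : EuclideanSpace ℝ (Fin n) × Fin N => b q.1 q.2 :=
    continuous_prod_of_discrete_right.2 hb
  have continuous_σ : Continuous fun q : EuclideanSpace ℝ (Fin n) × Fin N => σ q.1 q.2 :=
    continuous_prod_of_discrete_right.2 hσ
  have continuous_noise : Continuous fun r : (EuclideanSpace ℝ (Fin n) × Fin N) × (Fin m → ℝ) =>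
      WithLp.toLp 2 (σ r.1.1 r.1.2 *ᵥ r.2) :=
    (PiLp.continuous_toLp 2 _).comp
      ((continuous_σ.comp continuous_fst).matrix_mulVec continuous_snd)
  have continuous_drift : Continuous
      fun r : (EuclideanSpace ℝ (Fin n) × Fin N) × (Fin m → ℝ) => r.1.1 + δ • b r.1.1 r.1.2 :=
    (continuous_fst.add (continuous_b.const_smul δ)).comp continuous_fst
  exact continuous_drift.add (continuous_noise.const_smul (Real.sqrt δ))

lemma integrable_eulerMaruyamaStep (q : EuclideanSpace ℝ (Fin n) × Fin N) :
    Integrable (eulerMaruyamaStep b σ δ q) (stdGaussianPi m) := by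
  let T : (Fin m → ℝ) →L[ℝ] EuclideanSpace ℝ (Fin n) := LinearMap.toContinuousLinearMap
    ((WithLp.linearEquiv 2 ℝ (Fin n → ℝ)).symm.toLinearMap ∘ₗ (σ q.1 q.2).mulVecLin)
  exact (integrable_const _).add
    ((T.integrable_comp integrable_id_stdGaussianPi).smul (Real.sqrt δ))

lemma eulerMaruyamaStep_sub_of_additive (hadd : ∀ x y i, σ x i = σ y i)
    (x y : EuclideanSpace ℝ (Fin n)) (i : Fin N) (z : Fin m → ℝ) :
    eulerMaruyamaStep b σ δ (x, i) z - eulerMaruyamaStep b σ δ (y, i) z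
      = x - y + δ • (b x i - b y i) := by
  simp only [eulerMaruyamaStep, hadd x y i, smul_sub]
  abel

lemma isAverageContraction_eulerMaruyamaStep {P : Matrix (Fin N) (Fin N) ℝ} {β : Fin N → ℝ}
    {w : Fin N → ℝ≥0} {p ρ : ℝ≥0} (hadd : ∀ x y i, σ x i = σ y i)
    (hLip : ∀ i x y, ‖b x i - b y i‖ ≤ L * ‖x - y‖)
    (hβ : ∀ i x y, 2 * inner ℝ (x - y) (b x i - b y i) ≤ β i * ‖x - y‖ ^ 2) (hδ : 0 ≤ δ)
    (hP : ∀ i j, 0 ≤ P i j)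
    (hw : ∀ i, (P *ᵥ fun j => (w j : ℝ)) i * Real.exp (p / 2 * (β i * δ + L ^ 2 * δ ^ 2))
      ≤ ρ * w i) :
    IsAverageContraction (eulerMaruyamaStep b σ δ) (stdGaussianPi m) (rowKernel P) w p ρ := by
  intro i x y
  have mulVec_nonneg : 0 ≤ (P *ᵥ fun j => (w j : ℝ)) i :=
    dotProduct_nonneg_of_nonneg (hP i) fun j => (w j).coe_nonneg
  have enorm_rpow (u : EuclideanSpace ℝ (Fin n)) :
      ‖u‖ₑ ^ (p : ℝ) = ENNReal.ofReal (‖u‖ ^ (p : ℝ)) := by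
    rw [← ofReal_norm, ENNReal.ofReal_rpow_of_nonneg (norm_nonneg u) p.coe_nonneg]
  simp only [edist_eq_enorm_sub, eulerMaruyamaStep_sub_of_additive hadd, lintegral_const,
    measure_univ, mul_one, lintegral_coe_rowKernel hP, enorm_rpow]
  rw [← ENNReal.ofReal_mul mulVec_nonneg, ← ENNReal.coe_mul, ← ENNReal.ofReal_coe_nnreal,
    ← ENNReal.ofReal_mul (ρ * w i).coe_nonneg]
  refine ENNReal.ofReal_le_ofReal ?_
  calc (P *ᵥ fun j => (w j : ℝ)) i * ‖x - y + δ • (b x i - b y i)‖ ^ (p : ℝ)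
      ≤ (P *ᵥ fun j => (w j : ℝ)) i
          * (Real.exp (p / 2 * (β i * δ + L ^ 2 * δ ^ 2)) * ‖x - y‖ ^ (p : ℝ)) := by
        gcongr
        exact norm_add_smul_rpow_le hδ p.coe_nonneg (hβ i x y) (hLip i x y)
    _ ≤ ρ * w i * ‖x - y‖ ^ (p : ℝ) := by
        rw [← mul_assoc]
        gcongr ?_ * _
        exact hw i

lemma EMKernel_eq_switchingKernel (hQ : IsConservativeQMatrix Q) (hδ : 0 ≤ δ)
    (hΦ : Measurable (eulerMaruyamaStep b σ δ).uncurry) :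
    EMKernel Q b σ δ = switchingKernel (eulerMaruyamaStep b σ δ) (stdGaussianPi m)
      (rowKernel (matExp (δ • Q))) := by
  have := isMarkovKernel_rowKernel (hQ.matExp_mem_rowStochastic hδ)
  exact funext fun q => (switchingKernel_apply (R := rowKernel (matExp (δ • Q))) hΦ q).symm

lemma isInvariantMeasure_iff_invariant {α : Type*} [MeasurableSpace α] {κ : Kernel α α}
    {π : Measure α} : IsInvariantMeasure κ π ↔ κ.Invariant π := by
  rw [Kernel.Invariant, Measure.ext_iff]
  refine forall₂_congr fun A hA => ?_
  rw [Measure.bind_apply hA κ.aemeasurable]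

end EulerMaruyama

open Matrix in
lemma matExp_smul_mulVec_mul_exp_le {N : ℕ} {Q : Matrix (Fin N) (Fin N) ℝ} {β ξ : Fin N → ℝ}
    {p η β₀ q₀ r L δ : ℝ} (hQ : IsConservativeQMatrix Q) (hp : 0 ≤ p) (hξ : ∀ i, 0 < ξ i)
    (hsup : (Q + (p / 2) • diagonal β) *ᵥ ξ ≤ -η • ξ) (hr : ∀ i j, ξ i ≤ r * ξ j)
    (hβ : ∀ i, |β i| ≤ β₀) (hq : ∀ i, -Q i i ≤ q₀) (hδ : 0 ≤ δ) (i : Fin N) :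
    (matExp (δ • Q) *ᵥ ξ) i * Real.exp (p / 2 * (β i * δ + L ^ 2 * δ ^ 2))
      ≤ Real.exp (δ * (p * (L ^ 2 + β₀ * q₀ * r) * δ - 2 * η) / 2) * ξ i := by
  have osc (i k : Fin N) : p / 2 * β i - p / 2 * β k ≤ p * β₀ := by
    nlinarith [le_of_abs_le (hβ i), neg_le_of_abs_le (hβ k)]
  have sup (i : Fin N) : (Q *ᵥ ξ) i ≤ -(η + p / 2 * β i) * ξ i := by
    have := hsup i
    simp only [add_mulVec, smul_mulVec, Pi.add_apply, Pi.smul_apply, mulVec_diagonal,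
      smul_eq_mul] at this
    linarith
  calc (matExp (δ • Q) *ᵥ ξ) i * Real.exp (p / 2 * (β i * δ + L ^ 2 * δ ^ 2))
      ≤ Real.exp (-(η + p / 2 * β i) * δ + p * β₀ * q₀ * r * δ ^ 2 / 2) * ξ i
          * Real.exp (p / 2 * (β i * δ + L ^ 2 * δ ^ 2)) := by
        gcongr
        exact matExp_smul_mulVec_le hQ hq hξ hr osc sup hδ i
    _ = Real.exp (δ * (p * (L ^ 2 + β₀ * q₀ * r) * δ - 2 * η) / 2) * ξ i := by
        rw [mul_right_comm, ← Real.exp_add]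
        ring_nf

lemma le_mul_mul_of_isGreatest_range_of_isLeast_range_inv {ι : Type*} {ξ : ι → ℝ} {ξhat ξbar : ℝ}
    (hξ : ∀ i, 0 < ξ i) (hξhat : IsGreatest (Set.range ξ) ξhat)
    (hξbar : IsLeast (Set.range ξ) ξbar⁻¹) (i j : ι) : ξ i ≤ ξhat * ξbar * ξ j := by
  obtain ⟨k, hk⟩ := hξbar.1
  have hξbar_pos : 0 < ξbar := inv_pos.1 (hk ▸ hξ k)
  have hξhat_pos : 0 < ξhat := (hξ i).trans_le (hξhat.2 ⟨i, rfl⟩)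
  have one_le : 1 ≤ ξbar * ξ j := (inv_le_iff_one_le_mul₀' hξbar_pos).1 (hξbar.2 ⟨j, rfl⟩)
  calc ξ i ≤ ξhat := hξhat.2 ⟨i, rfl⟩
    _ ≤ ξhat * (ξbar * ξ j) := le_mul_of_one_le_right hξhat_pos.le one_le
    _ = ξhat * ξbar * ξ j := (mul_assoc _ _ _).symm

lemma mul_lt_of_lt_div_rpow {α η p δ : ℝ} (hδ : 0 < δ) (hδ1 : δ ≤ 1) (hp : 0 < p) (hp2 : p ≤ 2)
    (hη : 0 < η) (h : δ < (η / α) ^ (2 / p)) : α * δ < η := by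
  obtain hα | hα := le_or_gt α 0
  · exact (mul_nonpos_of_nonpos_of_nonneg hα hδ.le).trans_lt hη
  have rpow_lt : δ ^ (p / 2) < η / α := by
    rwa [← Real.lt_rpow_inv_iff_of_pos hδ.le (by positivity) (by positivity), inv_div]
  have le_rpow : δ ≤ δ ^ (p / 2) := by
    simpa using Real.rpow_le_rpow_of_exponent_ge hδ hδ1 (show p / 2 ≤ 1 by linarith)
  exact (lt_div_iff₀' hα).1 (le_rpow.trans_lt rpow_lt)

lemma sq_add_mul_le_eulerMaruyama_constant {L β₀ p s : ℝ} (hL : 0 ≤ L) (hβ₀ : 0 ≤ β₀)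
    (hp : 0 ≤ p) (hs : 0 ≤ s) :
    L ^ 2 + β₀ * s ≤ β₀ + 4 * L ^ 2 * (3 + 4 * β₀)
      + (4 : ℝ) ^ ((2 + p) / 2) * β₀ * ((4 : ℝ) ^ (p / 2) * L ^ p + s) := by
  have one_le : (1 : ℝ) ≤ (4 : ℝ) ^ ((2 + p) / 2) := Real.one_le_rpow (by norm_num) (by positivity)
  have mul_le : β₀ * s ≤ (4 : ℝ) ^ ((2 + p) / 2) * β₀ * ((4 : ℝ) ^ (p / 2) * L ^ p + s) :=
    mul_le_mul (le_mul_of_one_le_left hβ₀ one_le) (le_add_of_nonneg_left (by positivity)) hs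
      (by positivity)
  have sq_le : L ^ 2 ≤ 4 * L ^ 2 * (3 + 4 * β₀) := by nlinarith [sq_nonneg L]
  linarith

lemma mul_lt_two_mul_of_lt_eulerMaruyama_threshold {L β₀ p s α η δ : ℝ} (hL : 0 ≤ L)
    (hβ₀ : 0 ≤ β₀) (hp : 0 < p) (hp2 : p ≤ 2) (hs : 0 ≤ s)
    (hα : α = p * (β₀ + 4 * L ^ 2 * (3 + 4 * β₀)
      + (4 : ℝ) ^ ((2 + p) / 2) * β₀ * ((4 : ℝ) ^ (p / 2) * L ^ p + s)))
    (hη : 0 < η) (hδ : 0 < δ) (hδ1 : δ ≤ 1) (h : δ < (η / α) ^ (2 / p)) :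
    p * (L ^ 2 + β₀ * s) * δ < 2 * η := by
  have hα_ge : p * (L ^ 2 + β₀ * s) ≤ α := hα ▸
    mul_le_mul_of_nonneg_left (sq_add_mul_le_eulerMaruyama_constant hL hβ₀ hp.le hs) hp.le
  calc p * (L ^ 2 + β₀ * s) * δ ≤ α * δ := mul_le_mul_of_nonneg_right hα_ge hδ.le
    _ < η := mul_lt_of_lt_div_rpow hδ hδ1 hp hp2 hη h
    _ < 2 * η := lt_two_mul_self hη

open scoped NNReal in
theorem stmt5_general {n m N : ℕ} [NeZero N] {Q : Matrix (Fin N) (Fin N) ℝ}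
    (hQ : IsConservativeQMatrix Q) (hirr : MatrixIrreducible Q)
    {b : EuclideanSpace ℝ (Fin n) → Fin N → EuclideanSpace ℝ (Fin n)}
    {σ : EuclideanSpace ℝ (Fin n) → Fin N → Matrix (Fin n) (Fin m) ℝ}
    (hadd : ∀ x y i, σ x i = σ y i) {L : ℝ}
    (hLip : ∀ i x y, ‖b x i - b y i‖ ≤ L * ‖x - y‖) {β : Fin N → ℝ}
    (hH : ∀ i x y, 2 * inner ℝ (x - y) (b x i - b y i) ≤ β i * ‖x - y‖ ^ 2)
    {p : ℝ} (hp : 0 < p) (hp1 : p ≤ 1) {η : ℝ} {ξ : Fin N → ℝ} (hξ : ∀ i, 0 < ξ i)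
    (hsup : (Q + (p / 2) • Matrix.diagonal β).mulVec ξ ≤ -η • ξ)
    {r β₀ q₀ : ℝ} (hr : ∀ i j, ξ i ≤ r * ξ j) (hβ : ∀ i, |β i| ≤ β₀) (hq : ∀ i, -Q i i ≤ q₀)
    {δ : ℝ} (hδ : 0 < δ) (hδη : p * (L ^ 2 + β₀ * q₀ * r) * δ < 2 * η) :
    ∃! π : Measure (EuclideanSpace ℝ (Fin n) × Fin N),
      IsProbabilityMeasure π ∧ IsInvariantMeasure (EMKernel Q b σ δ) π := by
  lift p to ℝ≥0 using hp.le
  lift ξ to Fin N → ℝ≥0 using fun i => (hξ i).le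
  let ρ : ℝ≥0 :=
    ⟨Real.exp (δ * (p * (L ^ 2 + β₀ * q₀ * r) * δ - 2 * η) / 2), (Real.exp_pos _).le⟩
  have hρ : ρ < 1 := by
    refine Real.exp_lt_one_iff.2 ?_
    nlinarith
  have continuous_b (i : Fin N) : Continuous fun x => b x i :=
    (LipschitzWith.of_dist_le' fun x y => by simpa [dist_eq_norm] using hLip i x y).continuous
  have continuous_step : Continuous (eulerMaruyamaStep b σ δ).uncurry :=
    continuous_eulerMaruyamaStep continuous_b fun i => continuous_const.congr fun x => hadd 0 x i
  have hP := hQ.matExp_mem_rowStochastic hδ.le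
  have := isMarkovKernel_rowKernel hP
  simp only [EMKernel_eq_switchingKernel hQ hδ.le continuous_step.measurable,
    isInvariantMeasure_iff_invariant]
  exact existsUnique_invariant_switchingKernel
    (fun i j => rowKernel_singleton_pos (hQ.matExp_pos hirr hδ i j)) continuous_step.measurable
    (fun i z => continuous_step.comp (by fun_prop : Continuous fun x => ((x, i), z)))
    (fun i =>
      lintegral_edist_rpow_ne_top_of_integrable (integrable_eulerMaruyamaStep (0, i)) hp hp1)
    (fun i => (NNReal.coe_pos.1 (hξ i)).ne') hp hp1 hρ
    (isAverageContraction_eulerMaruyamaStep hadd hLip hH hδ.le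
      (fun _ _ => Matrix.nonneg_of_mem_rowStochastic hP)
      (matExp_smul_mulVec_mul_exp_le hQ hp.le hξ hsup hr hβ hq hδ.le))

theorem stmt5 {n m N : ℕ} (hN : 2 ≤ N)
    (Q : Matrix (Fin N) (Fin N) ℝ)
    (hQ : IsConservativeQMatrix Q) (hirr : MatrixIrreducible Q)
    (μ : Fin N → ℝ) (hμpos : ∀ i, 0 < μ i) (hμsum : ∑ i, μ i = 1)
    (hμstat : ∀ j, ∑ i, μ i * Q i j = 0)
    (b : EuclideanSpace ℝ (Fin n) → Fin N → EuclideanSpace ℝ (Fin n))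
    (σ : EuclideanSpace ℝ (Fin n) → Fin N → Matrix (Fin n) (Fin m) ℝ)
    -- additive noise : `σ` does not depend on the space variable
    (hadd : ∀ x y i, σ x i = σ y i)
    -- global Lipschitz condition
    (L : ℝ) (hL : 0 ≤ L)
    (hLip : ∀ i x y, ‖b x i - b y i‖ + hsNorm (σ x i - σ y i) ≤ L * ‖x - y‖)
    -- condition (H)
    (c₀ : ℝ) (hc₀ : 0 < c₀) (β : Fin N → ℝ)
    (hH1 : ∀ i x, 2 * (inner ℝ x (b x i) : ℝ) + hsNorm (σ x i) ^ 2 ≤ c₀ + β i * ‖x‖ ^ 2)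
    (hH2 : ∀ i x y, 2 * (inner ℝ (x - y) (b x i - b y i) : ℝ)
        + hsNorm (σ x i - σ y i) ^ 2 ≤ β i * ‖x - y‖ ^ 2)
    -- averaging condition
    (havg : ∑ i, μ i * β i < 0)
    -- `p`, `η_p` and the Perron–Frobenius eigenvector `ξ`
    (p : ℝ) (hp : 0 < p) (hp1 : p < 1) (ηp : ℝ)
    (hη : IsGreatest (spectrumRe (Q + (p / 2) • Matrix.diagonal β)) (-ηp))
    (hηpos : 0 < ηp)
    (ξ : Fin N → ℝ) (hξpos : ∀ i, 0 < ξ i)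
    (hξeig : (Q + (p / 2) • Matrix.diagonal β).mulVec ξ = (-ηp) • ξ)
    -- the constants of Theorem 3.1
    (ξhat ξbar β₀ q₀ α : ℝ)
    (hξhat : IsGreatest (Set.range ξ) ξhat)
    (hξbar : IsLeast (Set.range ξ) ξbar⁻¹)
    (hβ₀ : IsGreatest (Set.range fun i => |β i|) β₀)
    (hq₀ : IsGreatest (Set.range fun i => -Q i i) q₀)
    (hα : α = p * (β₀ + 4 * L ^ 2 * (3 + 4 * β₀)
        + (4 : ℝ) ^ ((2 + p) / 2) * β₀ * ((4 : ℝ) ^ (p / 2) * L ^ p + q₀ * ξhat * ξbar)))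
    -- the stepsize
    (δ : ℝ) (hδ0 : 0 < δ) (hδ1 : δ < 1)
    (hδ : δ < min (1 / (16 * L ^ 2)) ((ηp / α) ^ (2 / p))) :
    ∃! π : Measure (EuclideanSpace ℝ (Fin n) × Fin N),
      IsProbabilityMeasure π ∧ IsInvariantMeasure (EMKernel Q b σ δ) π := by
  have : NeZero N := ⟨by omega⟩
  have hξ_ratio := le_mul_mul_of_isGreatest_range_of_isLeast_range_inv hξpos hξhat hξbar
  have hβ (i : Fin N) : |β i| ≤ β₀ := hβ₀.2 ⟨i, rfl⟩
  have hq (i : Fin N) : -Q i i ≤ q₀ := hq₀.2 ⟨i, rfl⟩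
  have hratio_nonneg : 0 ≤ ξhat * ξbar := by nlinarith [hξ_ratio 0 0, hξpos 0]
  have hs : 0 ≤ q₀ * ξhat * ξbar := mul_assoc q₀ ξhat ξbar ▸
    mul_nonneg ((neg_nonneg.2 (hQ.diag_nonpos 0)).trans (hq 0)) hratio_nonneg
  have hδη := mul_lt_two_mul_of_lt_eulerMaruyama_threshold hL ((abs_nonneg _).trans (hβ 0)) hp
    (hp1.le.trans one_le_two) hs hα hηpos hδ0 hδ1.le (hδ.trans_le (min_le_right _ _))
  exact stmt5_general hQ hirr hadd
    (fun i x y => (le_add_of_nonneg_right (Real.sqrt_nonneg _)).trans (hLip i x y))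
    (fun i x y => (le_add_of_nonneg_right (sq_nonneg _)).trans (hH2 i x y))
    hp hp1.le hξpos hξeig.le hξ_ratio hβ hq hδ0 (by simpa only [mul_assoc] using hδη)
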